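/- arXiv:2407.10150 — 3 statements merged into one kernel-verified Lean document; each statement's English description precedes it below -/
import Mathlib

section
/- Let n ≥ 3 and let φ : M_n(ℂ) → M_n(ℂ) be a (not necessarily linear, additive or continuous) map such that for any a, b ∈ M_n(ℂ) there is an algebra automorphism θ_{a,b} of M_n(ℂ) with φ(a) + φ(b) = θ_{a,b}(a + b). Then φ is either an algebra automorphism or an algebra anti-automorphism of M_n(ℂ). -/
/-- An algebra automorphism of a complex algebra: a bijective complex-linear map
which is multiplicative. -/
def IsAlgAutomorphism {A : Type*} [Ring A] [Algebra ℂ A] (θ : A → A) : Prop :=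
  Function.Bijective θ ∧ IsLinearMap ℂ θ ∧ ∀ a b : A, θ (a * b) = θ a * θ b

/-- An algebra anti-automorphism of a complex algebra: a bijective complex-linear map
which reverses multiplication. -/
def IsAlgAntiAutomorphism {A : Type*} [Ring A] [Algebra ℂ A] (θ : A → A) : Prop :=
  Function.Bijective θ ∧ IsLinearMap ℂ θ ∧ ∀ a b : A, θ (a * b) = θ b * θ a

/-!
Comparing the traces of the powers of `φ a + φ b` and `a + b` replaces the automorphisms, which
depend on `a` and `b`, by identities in `φ` alone. Squares show that `φ` preserves the
nondegenerate form `tr (a * b)`, which forces `φ` to be linear and bijective. Cubes then give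
`tr (φ a * φ a * φ b) = tr (a * a * b)`, so `φ` is a Jordan homomorphism, and by Herstein's theorem
a Jordan homomorphism onto a prime ring without 2-torsion is multiplicative or antimultiplicative.
-/

theorem exists_linearEquiv_of_bilinForm_map_map {K V : Type*} [Field K] [AddCommGroup V]
    [Module K V] [FiniteDimensional K V] {B : LinearMap.BilinForm K V} (hB : B.Nondegenerate)
    {φ : V → V} (hφ : ∀ x y, B (φ x) (φ y) = B x y) : ∃ e : V ≃ₗ[K] V, ⇑e = φ := by
  let b := Module.finBasis K V
  -- `L` is the linear map agreeing with `φ` on a basis; the form cannot tell the two apart.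
  let L : V →ₗ[K] V := b.constr K (φ ∘ b)
  have hLb (i) : L (b i) = φ (b i) := b.constr_basis K _ i
  have hφL (x y) : B (φ x) (L y) = B x y :=
    LinearMap.congr_fun (b.ext (f₁ := B (φ x) ∘ₗ L) fun i => by simp [hLb, hφ]) y
  have hLL (x y) : B (L x) (L y) = B x y :=
    LinearMap.congr_fun
      (b.ext (f₁ := B.flip (L y) ∘ₗ L) (f₂ := B.flip y) fun i => by simp [hLb, hφL]) x
  have hL_inj : Function.Injective L := by
    refine (injective_iff_map_eq_zero L).2 fun y hy => hB.2 y fun x => ?_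
    rw [← hLL, hy, map_zero]
  have hL_surj : Function.Surjective L := LinearMap.injective_iff_surjective.1 hL_inj
  have hL_eq : ⇑L = φ := by
    refine funext fun x => sub_eq_zero.1 (hB.1 _ fun z => ?_)
    obtain ⟨y, rfl⟩ := hL_surj z
    rw [map_sub, LinearMap.sub_apply, hφL, hLL, sub_self]
  exact ⟨.ofBijective L ⟨hL_inj, hL_surj⟩, hL_eq⟩

section TraceForm

/-- The trace form `(a, b) ↦ tr (a * b)` on square matrices. It differs from `Algebra.traceForm`,
which traces left multiplication by `a * b` and hence carries an extra factor, the matrix size. -/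
def matrixTraceForm (n K : Type*) [Fintype n] [CommRing K] :
    LinearMap.BilinForm K (Matrix n n K) :=
  (LinearMap.mul K (Matrix n n K)).compr₂ (Matrix.traceLinearMap n K K)

variable {n K : Type*} [Fintype n] [CommRing K]

@[simp]
theorem matrixTraceForm_apply (a b : Matrix n n K) : matrixTraceForm n K a b = (a * b).trace :=
  rfl

theorem matrixTraceForm_nondegenerate : (matrixTraceForm n K).Nondegenerate :=
  ⟨fun a h => Matrix.ext_iff_trace_mul_right.2 fun x => by simpa using h x,
    fun a h => Matrix.ext_iff_trace_mul_left.2 fun x => by simpa using h x⟩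

end TraceForm

-- A group is not the union of two proper subgroups; apply this in each argument.
theorem biadditive_eq_zero_or_eq_zero {G H M N : Type*} [AddGroup G] [AddGroup H]
    [AddCommGroup M] [AddCommGroup N] {P : G →+ H →+ M} {Q : G →+ H →+ N}
    (h : ∀ a b, P a b = 0 ∨ Q a b = 0) : P = 0 ∨ Q = 0 := by
  have hrow (a : G) : P a = 0 ∨ Q a = 0 := by
    have hcover : ((⊤ : AddSubgroup H) : Set H) ⊆ (P a).ker ∪ (Q a).ker := fun b _ => h a b
    refine (AddSubgroupClass.subset_union.1 hcover).imp ?_ ?_ <;>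
      exact fun hker => AddMonoidHom.ext fun b => hker (AddSubgroup.mem_top b)
  have hcover : ((⊤ : AddSubgroup G) : Set G) ⊆ P.ker ∪ Q.ker := fun a _ => hrow a
  refine (AddSubgroupClass.subset_union.1 hcover).imp ?_ ?_ <;>
    exact fun hker => AddMonoidHom.ext fun a => hker (AddSubgroup.mem_top a)

/-- A ring is prime if the product of any two nonzero two-sided ideals is nonzero; this is the
equivalent elementwise condition. The zero ring is allowed. -/
def IsPrimeRing (S : Type*) [Ring S] : Prop :=
  ∀ a b : S, (∀ x, a * x * b = 0) → a = 0 ∨ b = 0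

theorem IsPrimeRing.eq_zero_or_eq_zero_of_mul_mul_add_mul_mul {S : Type*} [Ring S]
    (hS : IsPrimeRing S) (h2 : IsSMulRegular S 2) {a b : S}
    (h : ∀ x, a * x * b + b * x * a = 0) : a = 0 ∨ b = 0 := by
  have hswap (x) : a * x * b = -(b * x * a) := eq_neg_of_add_eq_zero_left (h x)
  -- Move `b` to the left through `a * x * b * y * a`, across `x` alone or across `y` and then `x`.
  have hzero (x y) : b * x * (a * y * a) = 0 := by
    have hx : a * x * b * y * a = -(b * x * (a * y * a)) := by
      rw [hswap]; noncomm_ring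
    have hyx : a * x * b * y * a = b * x * (a * y * a) := by
      calc a * x * b * y * a = -(a * x * (a * y * b)) := by rw [hswap y]; noncomm_ring
        _ = -(a * (x * a * y) * b) := by noncomm_ring
        _ = b * x * (a * y * a) := by rw [hswap (x * a * y)]; noncomm_ring
    apply h2
    simp only [two_smul, smul_zero]
    exact add_eq_zero_iff_eq_neg.2 (hyx.symm.trans hx)
  refine or_iff_not_imp_right.2 fun hb => or_self_iff.1 (hS a a fun y => ?_)
  exact (hS b (a * y * a) fun x => hzero x y).resolve_left hb

theorem isPrimeRing_matrix {n K : Type*} [Fintype n] [DecidableEq n] [Ring K] [NoZeroDivisors K] :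
    IsPrimeRing (Matrix n n K) := by
  intro A B h
  have hentry (i j k l) : A i j * B k l = 0 := by
    simpa [Matrix.mul_apply, Matrix.single_apply, ite_and] using
      congrFun₂ (h (Matrix.single j k 1)) i l
  by_contra! hne
  obtain ⟨i, j, hA⟩ : ∃ i j, A i j ≠ 0 := by
    by_contra! hA; exact hne.1 (Matrix.ext hA)
  exact hne.2 (Matrix.ext fun k l => (mul_eq_zero.1 (hentry i j k l)).resolve_left hA)

theorem isSMulRegular_two {K V : Type*} [Ring K] [IsDomain K] [NeZero (2 : K)] [AddCommGroup V]
    [Module K V] [Module.IsTorsionFree K V] : IsSMulRegular V 2 := by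
  intro x y h
  simp only [← Nat.cast_smul_eq_nsmul K, Nat.cast_ofNat] at h
  exact smul_right_injective V (two_ne_zero : (2 : K) ≠ 0) h

/-- A Jordan homomorphism between rings: an additive map preserving squares, or equivalently, when
the codomain has no 2-torsion, the Jordan product `x * y + y * x`. -/
def IsJordanHom {R S : Type*} [Ring R] [Ring S] (f : R →+ S) : Prop :=
  ∀ x, f (x * x) = f x * f x

namespace IsJordanHom

variable {R S : Type*} [Ring R] [Ring S] {f : R →+ S}

theorem map_mul_add_mul (hf : IsJordanHom f) (x y : R) :
    f (x * y) + f (y * x) = f x * f y + f y * f x := by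
  have h := hf (x + y)
  simp only [add_mul, mul_add, map_add, hf x, hf y] at h
  linear_combination (norm := noncomm_ring) h

theorem map_mul_mul_self (hf : IsJordanHom f) (h2 : IsSMulRegular S 2) (x y : R) :
    f (x * y * x) = f x * f y * f x := by
  -- `2 xyx = x ∘ (x ∘ y) - x² ∘ y` for the Jordan product `x ∘ y = xy + yx`.
  have hxy := hf.map_mul_add_mul x y
  have hxxy := hf.map_mul_add_mul x (x * y + y * x)
  have hsq := hf.map_mul_add_mul (x * x) y
  rw [map_add, hxy] at hxxy
  rw [hf x] at hsq
  simp only [add_mul, mul_add, map_add, mul_assoc] at hxxy hsq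
  apply h2
  simp only [two_smul, mul_assoc]
  linear_combination (norm := noncomm_ring) hxxy - hsq

theorem map_mul_mul_add_mul_mul (hf : IsJordanHom f) (h2 : IsSMulRegular S 2) (x y z : R) :
    f (x * y * z) + f (z * y * x) = f x * f y * f z + f z * f y * f x := by
  have h := hf.map_mul_mul_self h2 (x + z) y
  simp only [add_mul, mul_add, map_add, hf.map_mul_mul_self h2] at h
  linear_combination (norm := noncomm_ring) h

theorem map_mul_sub_mul_mul_add_eq_zero (hf : IsJordanHom f) (h2 : IsSMulRegular S 2) (a b x : R) :
    (f (a * b) - f a * f b) * f x * (f (a * b) - f b * f a)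
      + (f (a * b) - f b * f a) * f x * (f (a * b) - f a * f b) = 0 := by
  -- Evaluate `f` at `(ab)x(ba) + (ba)x(ab) = a(bxb)a + b(axa)b` in both ways.
  have houter := hf.map_mul_mul_add_mul_mul h2 (a * b) x (b * a)
  have habxba : f (a * b * x * (b * a)) = f a * (f b * f x * f b) * f a := by
    simp only [← hf.map_mul_mul_self h2, mul_assoc]
  have hbaxab : f (b * a * x * (a * b)) = f b * (f a * f x * f a) * f b := by
    simp only [← hf.map_mul_mul_self h2, mul_assoc]
  have hba : f (b * a) = f a * f b + f b * f a - f (a * b) :=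
    eq_sub_of_add_eq' (hf.map_mul_add_mul a b)
  rw [habxba, hbaxab, hba] at houter
  linear_combination (norm := noncomm_ring) houter

theorem map_mul_or_map_mul_rev (hf : IsJordanHom f) (hsurj : Function.Surjective f)
    (hS : IsPrimeRing S) (h2 : IsSMulRegular S 2) :
    (∀ a b, f (a * b) = f a * f b) ∨ ∀ a b, f (a * b) = f b * f a := by
  let mulMap : R →+ R →+ S := AddMonoidHom.mul.compr₂ f
  let mapMul : R →+ R →+ S := (AddMonoidHom.mul.comp f).compl₂ f
  let mapMulRev : R →+ R →+ S := (AddMonoidHom.mul.flip.comp f).compl₂ f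
  have hpointwise (a b) : (mulMap - mapMul) a b = 0 ∨ (mulMap - mapMulRev) a b = 0 := by
    apply hS.eq_zero_or_eq_zero_of_mul_mul_add_mul_mul h2
    intro y
    obtain ⟨x, rfl⟩ := hsurj y
    exact hf.map_mul_sub_mul_mul_add_eq_zero h2 a b x
  refine (biadditive_eq_zero_or_eq_zero hpointwise).imp ?_ ?_ <;>
    exact fun h a b => DFunLike.congr_fun (DFunLike.congr_fun (sub_eq_zero.1 h) a) b

end IsJordanHom

section Trace

variable {n K : Type*} [Fintype n] [DecidableEq n] [CommRing K]

theorem trace_add_sq (a b : Matrix n n K) :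
    ((a + b) ^ 2).trace = (a ^ 2).trace + 2 * (a * b).trace + (b ^ 2).trace := by
  simp only [sq, add_mul, mul_add, Matrix.trace_add, Matrix.trace_mul_comm b a]
  ring

theorem trace_add_cube_sub_trace_sub_cube (a b : Matrix n n K) :
    ((a + b) ^ 3).trace - ((a - b) ^ 3).trace = 6 * (a * a * b).trace + 2 * (b ^ 3).trace := by
  have hexpand : (a + b) ^ 3 - (a - b) ^ 3
      = (a * a * b + a * a * b) + (a * b * a + a * b * a) + (b * a * a + b * a * a)
        + (b ^ 3 + b ^ 3) := by noncomm_ring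
  rw [← Matrix.trace_sub, hexpand]
  simp only [Matrix.trace_add]
  rw [Matrix.trace_mul_cycle b a a, Matrix.trace_mul_cycle a b a]
  ring

variable [IsDomain K]

theorem trace_pow_map_of_trace_pow_add [NeZero (2 : K)] {φ : Matrix n n K → Matrix n n K} {k : ℕ}
    (h : ∀ a b, ((φ a + φ b) ^ k).trace = ((a + b) ^ k).trace) (a : Matrix n n K) :
    (φ a ^ k).trace = (a ^ k).trace := by
  have haa := h a a
  simp only [← two_smul K, smul_pow, Matrix.trace_smul] at haa
  exact smul_right_injective K (pow_ne_zero k two_ne_zero) haa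

theorem trace_map_mul_map_of_trace_sq_add [NeZero (2 : K)] {φ : Matrix n n K → Matrix n n K}
    (h : ∀ a b, ((φ a + φ b) ^ 2).trace = ((a + b) ^ 2).trace) (a b : Matrix n n K) :
    (φ a * φ b).trace = (a * b).trace := by
  have hsq := trace_pow_map_of_trace_pow_add h
  apply mul_left_cancel₀ (two_ne_zero : (2 : K) ≠ 0)
  linear_combination h a b - hsq a - hsq b - trace_add_sq (φ a) (φ b) + trace_add_sq a b

theorem trace_map_mul_map_mul_map_of_trace_cube [NeZero (2 : K)] [NeZero (3 : K)]
    {f : Matrix n n K →+ Matrix n n K} (h : ∀ a, (f a ^ 3).trace = (a ^ 3).trace)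
    (a b : Matrix n n K) : (f a * f a * f b).trace = (a * a * b).trace := by
  have hfab := trace_add_cube_sub_trace_sub_cube (f a) (f b)
  rw [← map_add, ← map_sub, h, h, h] at hfab
  apply mul_left_cancel₀ (mul_ne_zero two_ne_zero three_ne_zero : (2 * 3 : K) ≠ 0)
  linear_combination trace_add_cube_sub_trace_sub_cube a b - hfab

theorem isJordanHom_of_trace [NeZero (2 : K)] [NeZero (3 : K)]
    {f : Matrix n n K →+ Matrix n n K} (hf : Function.Surjective f)
    (h_mul : ∀ a b, (f a * f b).trace = (a * b).trace)
    (h_cube : ∀ a, (f a ^ 3).trace = (a ^ 3).trace) : IsJordanHom f := by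
  intro x
  refine Matrix.ext_iff_trace_mul_right.2 fun y => ?_
  obtain ⟨b, rfl⟩ := hf y
  rw [h_mul, trace_map_mul_map_mul_map_of_trace_cube h_cube]

end Trace

theorem stmt0_general {n K : Type*} [Fintype n] [DecidableEq n] [Field K] [NeZero (2 : K)]
    [NeZero (3 : K)] (φ : Matrix n n K → Matrix n n K)
    (h_sq : ∀ a b, ((φ a + φ b) ^ 2).trace = ((a + b) ^ 2).trace)
    (h_cube : ∀ a b, ((φ a + φ b) ^ 3).trace = ((a + b) ^ 3).trace) :
    Function.Bijective φ ∧ IsLinearMap K φ ∧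
      ((∀ a b, φ (a * b) = φ a * φ b) ∨ ∀ a b, φ (a * b) = φ b * φ a) := by
  have h_mul := trace_map_mul_map_of_trace_sq_add h_sq
  obtain ⟨e, rfl⟩ := exists_linearEquiv_of_bilinForm_map_map
    (matrixTraceForm_nondegenerate (n := n) (K := K)) h_mul
  have h_jordan : IsJordanHom (e : Matrix n n K →+ Matrix n n K) :=
    isJordanHom_of_trace e.surjective h_mul (trace_pow_map_of_trace_pow_add h_cube)
  exact ⟨e.bijective, e.toLinearMap.isLinear,
    h_jordan.map_mul_or_map_mul_rev e.surjective isPrimeRing_matrix (isSMulRegular_two (K := K))⟩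

namespace IsAlgAutomorphism

theorem exists_algEquiv {A : Type*} [Ring A] [Algebra ℂ A] {θ : A → A}
    (h : IsAlgAutomorphism θ) : ∃ e : A ≃ₐ[ℂ] A, ⇑e = θ := by
  obtain ⟨hbij, hlin, hmul⟩ := h
  exact ⟨AlgEquiv.ofLinearEquiv (.ofBijective (hlin.mk' θ) hbij)
    (MulEquiv.map_one (MulEquiv.ofBijective (MulHom.mk θ hmul) hbij)) hmul, rfl⟩

theorem trace_pow {n : Type*} [Fintype n] [DecidableEq n] {θ : Matrix n n ℂ → Matrix n n ℂ}
    (h : IsAlgAutomorphism θ) (a : Matrix n n ℂ) (k : ℕ) :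
    (θ a ^ k).trace = (a ^ k).trace := by
  obtain ⟨e, rfl⟩ := h.exists_algEquiv
  rw [← map_pow, Matrix.trace_map]

end IsAlgAutomorphism

theorem trace_pow_eq_of_exists_isAlgAutomorphism {n : Type*} [Fintype n] [DecidableEq n]
    {a b : Matrix n n ℂ} (h : ∃ θ : Matrix n n ℂ → Matrix n n ℂ, IsAlgAutomorphism θ ∧ a = θ b)
    (k : ℕ) : (a ^ k).trace = (b ^ k).trace := by
  obtain ⟨θ, hθ, rfl⟩ := h
  exact hθ.trace_pow b k

theorem stmt0 (n : ℕ) (hn : 3 ≤ n)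
    (φ : Matrix (Fin n) (Fin n) ℂ → Matrix (Fin n) (Fin n) ℂ)
    (hφ : ∀ a b : Matrix (Fin n) (Fin n) ℂ,
      ∃ θ : Matrix (Fin n) (Fin n) ℂ → Matrix (Fin n) (Fin n) ℂ,
        IsAlgAutomorphism θ ∧ φ a + φ b = θ (a + b)) :
    IsAlgAutomorphism φ ∨ IsAlgAntiAutomorphism φ := by
  obtain ⟨hbij, hlin, hmul⟩ := stmt0_general φ
    (fun a b => trace_pow_eq_of_exists_isAlgAutomorphism (hφ a b) 2)
    (fun a b => trace_pow_eq_of_exists_isAlgAutomorphism (hφ a b) 3)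
  exact hmul.imp (⟨hbij, hlin, ·⟩) (⟨hbij, hlin, ·⟩)
end

section
/- Let A be a standard operator algebra on a complex Banach space E, and let φ : A → B(E) be a (not necessarily linear, additive or continuous) map such that for any a, b ∈ A there is a complex-linear map D_{a,b} : A → B(E) satisfying D_{a,b}(xy) = D_{a,b}(x)y + xD_{a,b}(y) for all x, y ∈ A, with φ(a)b + aφ(b) = D_{a,b}(ab). Then φ is a linear derivation, i.e., φ is complex-linear and φ(ab) = φ(a)b + aφ(b) for all a, b ∈ A. -/
set_option synthInstance.maxHeartbeats 1000000
set_option maxHeartbeats 1000000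
open Cardinal

/-!
A derivation `D` satisfies `c * D c * c = 0` whenever `c` is a nonzero scalar multiple of an
idempotent. Let `b = g ⊗ y` be a rank-one operator, so that `c = a * b = g ⊗ a y` is such a multiple
as soon as `g (a y) ≠ 0`. Testing `φ` on products `b * (k ⊗ z) = 0` shows that `φ b` maps `ker g`
into the span of `y`, hence has finite rank, and the condition on `φ` at `a, b` amounts to
`tr (φ a * b + a * φ b) = 0`. Thus `g (φ a y) = tr (φ a * b) = - tr (a * φ b)` depends linearly on
`a`. Any finitely many nonzero operators `a` satisfy `g (a y) ≠ 0` for a common choice of `y` and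
`g`, and this makes `φ` linear.

The Leibniz defect `δ(a, b) = φ (a * b) - φ a * b - a * φ b` is then bilinear, vanishes when
`a * b = 0`, and is a Hochschild cocycle. Together with `r * φ r * r = 0`, this forces `δ(a, r) = 0`
for every rank-one `r` with `r * r ≠ 0`. Given `b` and `y` with `b y ≠ 0`, choose `f` with `f y ≠ 0`
and `f (b y) ≠ 0`: the cocycle identity for `a`, `b` and `f ⊗ y` becomes `δ(a, b) * (f ⊗ y) = 0`,
whence `δ(a, b) y = 0`.
-/

section Algebra

variable {𝕜 B : Type*} [CommRing 𝕜] [NonUnitalRing B] [Module 𝕜 B] {A : NonUnitalSubalgebra 𝕜 B}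

/-- Linear derivations from a subalgebra `A` into the ambient algebra `B`, as a predicate on
functions. Mathlib's `Derivation` is restricted to commutative algebras. -/
structure IsDerivation (D : A → B) : Prop extends IsLinearMap 𝕜 D where
  leibniz : ∀ x y : A, D (x * y) = D x * (y : B) + (x : B) * D y

/-- Operational 2-local derivations: maps, with no linearity assumed, whose Leibniz expression at
each pair `a, b` is the value at `a * b` of a derivation depending on the pair. -/
def IsOperationalTwoLocalDerivation (φ : A → B) : Prop :=
  ∀ a b : A, ∃ D : A → B, IsDerivation D ∧ φ a * (b : B) + (a : B) * φ b = D (a * b)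

theorem IsOperationalTwoLocalDerivation.mul_add_mul_eq_zero {φ : A → B}
    (hφ : IsOperationalTwoLocalDerivation φ) {a b : A} (hab : a * b = 0) :
    φ a * (b : B) + (a : B) * φ b = 0 := by
  obtain ⟨D, hD, hφD⟩ := hφ a b
  rw [hφD, hab, hD.map_zero]

variable [IsScalarTower 𝕜 B B] [SMulCommClass 𝕜 B B]

theorem IsDerivation.smul_mul_mul_eq_zero {D : A → B} (hD : IsDerivation D) {c : A} {t : 𝕜}
    (hc : c * c = t • c) : t • ((c : B) * D c * c) = 0 := by
  have hcB : (c : B) * c = t • (c : B) := congrArg Subtype.val hc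
  have hDc : t • D c = D c * c + c * D c := by rw [← hD.map_smul, ← hc, hD.leibniz]
  have hdouble : t • ((c : B) * D c * c) = t • ((c : B) * D c * c) + t • ((c : B) * D c * c) :=
    calc t • ((c : B) * D c * c)
      _ = c * (t • D c) * c := by rw [mul_smul_comm, smul_mul_assoc]
      _ = c * D c * (c * c) + c * c * D c * c := by rw [hDc]; noncomm_ring
      _ = t • ((c : B) * D c * c) + t • ((c : B) * D c * c) := by
        rw [hcB, mul_smul_comm, smul_mul_assoc, smul_mul_assoc]
  exact left_eq_add.mp hdouble

theorem IsOperationalTwoLocalDerivation.smul_mul_mul_eq_zero {φ : A → B}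
    (hφ : IsOperationalTwoLocalDerivation φ) {a b : A} {t : 𝕜}
    (hab : (a * b) * (a * b) = t • (a * b)) :
    t • (((a * b : A) : B) * (φ a * b + a * φ b) * (a * b : A)) = 0 := by
  obtain ⟨D, hD, hφD⟩ := hφ a b
  rw [hφD]
  exact hD.smul_mul_mul_eq_zero hab

/-- The bilinear map `(a, b) ↦ φ (a * b) - φ a * b - a * φ b`, which measures the failure of the
Leibniz rule; up to sign, it is the Hochschild coboundary of `φ`. -/
def leibnizDefect (φ : A →ₗ[𝕜] B) : A →ₗ[𝕜] A →ₗ[𝕜] B :=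
  (LinearMap.mul 𝕜 A).compr₂ φ - (LinearMap.mul 𝕜 B).compl₁₂ φ A.toSubmodule.subtype
    - (LinearMap.mul 𝕜 B).compl₁₂ A.toSubmodule.subtype φ

theorem leibnizDefect_apply (φ : A →ₗ[𝕜] B) (a b : A) :
    leibnizDefect φ a b = φ (a * b) - φ a * b - a * φ b :=
  rfl

theorem leibnizDefect_cocycle (φ : A →ₗ[𝕜] B) (a b c : A) :
    leibnizDefect φ a b * c =
      a * leibnizDefect φ b c - leibnizDefect φ (a * b) c + leibnizDefect φ a (b * c) := by
  simp only [leibnizDefect_apply, mul_assoc, MulMemClass.coe_mul]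
  noncomm_ring

namespace IsOperationalTwoLocalDerivation

theorem leibnizDefect_eq_zero {φ : A →ₗ[𝕜] B} (hφ : IsOperationalTwoLocalDerivation φ) {a b : A}
    (hab : a * b = 0) : leibnizDefect φ a b = 0 := by
  rw [leibnizDefect_apply, hab, map_zero, zero_sub, ← neg_add', hφ.mul_add_mul_eq_zero hab,
    neg_zero]

theorem leibnizDefect_mul_eq_zero {φ : A →ₗ[𝕜] B} (hφ : IsOperationalTwoLocalDerivation φ)
    (a : A) {b c : A} (hbc : b * c = 0) : leibnizDefect φ a b * c = 0 := by
  have habc : a * b * c = 0 := by rw [mul_assoc, hbc, mul_zero]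
  rw [leibnizDefect_cocycle, hφ.leibnizDefect_eq_zero hbc, hφ.leibnizDefect_eq_zero habc, hbc,
    map_zero, mul_zero, sub_zero, add_zero]

theorem leibnizDefect_mul_self {φ : A →ₗ[𝕜] B} (hφ : IsOperationalTwoLocalDerivation φ) (a : A)
    {r : A} {t : 𝕜} (hr : r * r = t • r) :
    leibnizDefect φ a r * r = a * leibnizDefect φ r r := by
  have har : (t • a - a * r) * r = 0 := by
    rw [sub_mul, smul_mul_assoc, mul_assoc, hr, mul_smul_comm, sub_self]
  have hzero := hφ.leibnizDefect_eq_zero har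
  rw [map_sub, map_smul, LinearMap.sub_apply, LinearMap.smul_apply] at hzero
  rw [leibnizDefect_cocycle, hr, map_smul, sub_add, ← neg_sub (t • _), hzero, neg_zero, sub_zero]

end IsOperationalTwoLocalDerivation

end Algebra

namespace IsOperationalTwoLocalDerivation

variable {𝕜 B : Type*} [Field 𝕜] [NeZero (2 : 𝕜)] [NonUnitalRing B] [Module 𝕜 B]
  [IsScalarTower 𝕜 B B] [SMulCommClass 𝕜 B B] {A : NonUnitalSubalgebra 𝕜 B}

theorem mul_mul_self_eq_zero {φ : A → B} (hφ : IsOperationalTwoLocalDerivation φ) {r : A} {t : 𝕜}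
    (ht : t ≠ 0) (hr : r * r = t • r) : (r : B) * φ r * r = 0 := by
  have hrB : (r : B) * r = t • (r : B) := congrArg Subtype.val hr
  have hrr : (r * r) * (r * r) = (t * t) • (r * r) := by
    rw [hr, smul_mul_assoc, mul_smul_comm, hr, smul_smul]
  have hsandwich : (r : B) * (φ r * r + r * φ r) * r = (2 * t) • ((r : B) * φ r * r) :=
    calc (r : B) * (φ r * r + r * φ r) * r
      _ = r * φ r * (r * r) + r * r * φ r * r := by noncomm_ring
      _ = (2 * t) • ((r : B) * φ r * r) := by
        rw [hrB, mul_smul_comm, smul_mul_assoc, smul_mul_assoc]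
        module
  have hscaled : (2 * t ^ 5) • ((r : B) * φ r * r) = 0 := by
    have hzero := hφ.smul_mul_mul_eq_zero hrr
    rw [MulMemClass.coe_mul, hrB, smul_mul_assoc, smul_mul_assoc, mul_smul_comm, hsandwich] at hzero
    rw [← hzero]
    module
  exact (smul_eq_zero.mp hscaled).resolve_left (mul_ne_zero two_ne_zero (pow_ne_zero 5 ht))

theorem leibnizDefect_mul_self_eq_zero {φ : A →ₗ[𝕜] B} (hφ : IsOperationalTwoLocalDerivation φ)
    (a : A) {r : A} {t : 𝕜} (ht : t ≠ 0) (hr : r * r = t • r) : leibnizDefect φ a r * r = 0 := by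
  have hrB : (r : B) * r = t • (r : B) := congrArg Subtype.val hr
  have hself : leibnizDefect φ r r * r = 0 := by
    rw [leibnizDefect_apply, hr, map_smul, sub_mul, sub_mul, hφ.mul_mul_self_eq_zero ht hr,
      mul_assoc (φ r), hrB, smul_mul_assoc, mul_smul_comm, sub_self, sub_zero]
  have hscaled : t • (leibnizDefect φ a r * r) = 0 := by
    rw [← mul_smul_comm, ← hrB, ← mul_assoc, hφ.leibnizDefect_mul_self a hr, mul_assoc, hself,
      mul_zero]
  exact (smul_eq_zero.mp hscaled).resolve_left ht

end IsOperationalTwoLocalDerivation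

section Generic

variable {𝕜 : Type*} [Field 𝕜] [Infinite 𝕜]

theorem exists_forall_linearMap_apply_ne_zero {V W ι : Type*} [AddCommGroup V] [Module 𝕜 V]
    [AddCommGroup W] [Module 𝕜 W] [Finite ι] {L : ι → V →ₗ[𝕜] W} (hL : ∀ i, L i ≠ 0) :
    ∃ v, ∀ i, L i v ≠ 0 :=
  Submodule.exists_forall_notMem_of_forall_ne_top (fun i ↦ (L i).ker)
    fun i ↦ mt LinearMap.ker_eq_top.mp (hL i)

variable [TopologicalSpace 𝕜] [IsTopologicalRing 𝕜] {E F : Type*} [AddCommGroup E] [Module 𝕜 E]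
  [TopologicalSpace E] [AddCommGroup F] [Module 𝕜 F] [TopologicalSpace F] [SeparatingDual 𝕜 F]

theorem exists_strongDual_forall_apply_ne_zero {ι : Type*} [Finite ι] {v : ι → F}
    (hv : ∀ i, v i ≠ 0) : ∃ g : StrongDual 𝕜 F, ∀ i, g (v i) ≠ 0 := by
  refine exists_forall_linearMap_apply_ne_zero (L := fun i ↦ (topDualPairing 𝕜 F).flip (v i))
    fun i hi ↦ ?_
  obtain ⟨g, hg⟩ := SeparatingDual.exists_ne_zero (R := 𝕜) (hv i)
  exact hg (LinearMap.congr_fun hi g)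

theorem exists_forall_mem_strongDual_apply_ne_zero {s : Set (E →L[𝕜] F)} (hs : s.Finite) :
    ∃ (y : E) (g : StrongDual 𝕜 F), ∀ T ∈ s, T ≠ 0 → g (T y) ≠ 0 := by
  have := (hs.subset (Set.sep_subset s (· ≠ 0))).to_subtype
  obtain ⟨y, hy⟩ := exists_forall_linearMap_apply_ne_zero
    (L := fun T : {T ∈ s | T ≠ 0} ↦ (T : E →L[𝕜] F).toLinearMap)
    fun T hT ↦ T.2.2 (ContinuousLinearMap.coe_injective hT)
  obtain ⟨g, hg⟩ := exists_strongDual_forall_apply_ne_zero (𝕜 := 𝕜) hy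
  exact ⟨y, g, fun T hTs hT ↦ hg ⟨T, hTs, hT⟩⟩

end Generic

section Operator

variable {𝕜 E : Type*} [Field 𝕜] [TopologicalSpace 𝕜] [AddCommGroup E] [Module 𝕜 E]
  [TopologicalSpace E] [IsTopologicalAddGroup E] [ContinuousSMul 𝕜 E]
  {A : NonUnitalSubalgebra 𝕜 (E →L[𝕜] E)}

/-- Standard operator algebras. Only the rank-one operators are required to belong to `A`; when the
continuous functionals separate points, these span all continuous finite-rank operators. -/
def IsStandardOperatorAlgebra (A : NonUnitalSubalgebra 𝕜 (E →L[𝕜] E)) : Prop :=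
  ∀ (f : StrongDual 𝕜 E) (z : E), f.smulRight z ∈ A

namespace IsStandardOperatorAlgebra

/-- The rank-one operator `f ⊗ z`, sending `x` to `f x • z`, as an element of `A`. -/
def rankOne (hA : IsStandardOperatorAlgebra A) (f : StrongDual 𝕜 E) (z : E) : A :=
  ⟨f.smulRight z, hA f z⟩

variable (hA : IsStandardOperatorAlgebra A)

@[simp]
theorem rankOne_apply (f : StrongDual 𝕜 E) (z x : E) : (hA.rankOne f z : E →L[𝕜] E) x = f x • z :=
  rfl

theorem mul_rankOne (a : A) (f : StrongDual 𝕜 E) (z : E) :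
    a * hA.rankOne f z = hA.rankOne f ((a : E →L[𝕜] E) z) := by
  ext x
  simp

theorem rankOne_mul_rankOne (f g : StrongDual 𝕜 E) (y z : E) :
    hA.rankOne f y * hA.rankOne g z = f z • hA.rankOne g y := by
  ext x
  simp [smul_smul, mul_comm]

end IsStandardOperatorAlgebra

namespace IsOperationalTwoLocalDerivation

variable (hA : IsStandardOperatorAlgebra A) {φ : A → E →L[𝕜] E}
  (hφ : IsOperationalTwoLocalDerivation φ)
include hA hφ

theorem apply_mul_rankOne_eq_zero {a : A} {g : StrongDual 𝕜 E} {y : E}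
    (hay : g ((a : E →L[𝕜] E) y) ≠ 0) :
    g ((a : E →L[𝕜] E) y) * g (φ a y)
      + g ((a : E →L[𝕜] E) (φ (hA.rankOne g y) ((a : E →L[𝕜] E) y))) = 0 := by
  have hsq := hφ.smul_mul_mul_eq_zero (a := a) (b := hA.rankOne g y)
    (t := g ((a : E →L[𝕜] E) y)) (by rw [hA.mul_rankOne, hA.rankOne_mul_rankOne])
  rw [hA.mul_rankOne] at hsq
  simpa [hay] using congrArg (fun T : E →L[𝕜] E ↦ g (T ((a : E →L[𝕜] E) y))) hsq

variable [IsTopologicalRing 𝕜] [SeparatingDual 𝕜 E]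

protected theorem map_zero : φ 0 = 0 := by
  ext x
  rcases eq_or_ne x 0 with rfl | hx
  · simp
  obtain ⟨k, hk⟩ := SeparatingDual.exists_eq_one (R := 𝕜) hx
  have hzero := hφ.mul_add_mul_eq_zero (zero_mul (hA.rankOne k x))
  simpa [hk] using DFunLike.congr_fun hzero x

theorem apply_rankOne_mem_span_singleton {g : StrongDual 𝕜 E} {y z : E} (hy : y ≠ 0)
    (hz : g z = 0) : φ (hA.rankOne g y) z ∈ Submodule.span 𝕜 {y} := by
  obtain ⟨k, hk⟩ := SeparatingDual.exists_eq_one (R := 𝕜) hy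
  have hzero := hφ.mul_add_mul_eq_zero (a := hA.rankOne g y) (b := hA.rankOne k z)
    (by rw [hA.rankOne_mul_rankOne, hz, zero_smul])
  have heval : φ (hA.rankOne g y) z + g (φ (hA.rankOne k z) y) • y = 0 := by
    simpa [hk] using DFunLike.congr_fun hzero y
  rw [eq_neg_of_add_eq_zero_left heval]
  exact neg_mem (Submodule.smul_mem _ _ (Submodule.mem_span_singleton_self y))

theorem exists_apply_rankOne_eq {g : StrongDual 𝕜 E} {y : E} (hg : g ≠ 0) (hy : y ≠ 0) :
    ∃ (u : E) (h : StrongDual 𝕜 E), ∀ z, φ (hA.rankOne g y) z = g z • u + h z • y := by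
  obtain ⟨w, hw⟩ : ∃ w, g w = 1 := LinearMap.surjective (f := g.toLinearMap)
    (fun h ↦ hg (ContinuousLinearMap.coe_injective h)) 1
  obtain ⟨k, hk⟩ := SeparatingDual.exists_eq_one (R := 𝕜) hy
  let u := φ (hA.rankOne g y) w
  refine ⟨u, k ∘L (φ (hA.rankOne g y) - g.smulRight u), fun z ↦ ?_⟩
  obtain ⟨s, hs⟩ := Submodule.mem_span_singleton.mp
    (hφ.apply_rankOne_mem_span_singleton hA (g := g) (z := z - g z • w) hy (by simp [hw]))
  have hz : φ (hA.rankOne g y) z = g z • u + s • y := by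
    rw [hs, map_sub, map_smul, add_sub_cancel]
  simp [hz, hk]

theorem exists_linearMap_eq_apply (g : StrongDual 𝕜 E) (y : E) :
    ∃ τ : A →ₗ[𝕜] 𝕜, ∀ a : A, ((a : E →L[𝕜] E) ≠ 0 → g ((a : E →L[𝕜] E) y) ≠ 0) →
      g (φ a y) = τ a := by
  rcases eq_or_ne g 0 with rfl | hg
  · exact ⟨0, fun a _ ↦ by simp⟩
  rcases eq_or_ne y 0 with rfl | hy
  · exact ⟨0, fun a _ ↦ by simp⟩
  obtain ⟨u, h, huh⟩ := hφ.exists_apply_rankOne_eq hA hg hy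
  let eval (x : E) : A →ₗ[𝕜] E :=
    (LinearMap.applyₗ x ∘ₗ ContinuousLinearMap.coeLM 𝕜) ∘ₗ A.toSubmodule.subtype
  refine ⟨-(g ∘ₗ eval u + h ∘ₗ eval y : A →ₗ[𝕜] 𝕜), fun a ha ↦ ?_⟩
  rcases eq_or_ne a 0 with rfl | ha₀
  · simp [hφ.map_zero hA]
  have hay := ha (by simpa using ha₀)
  have hskew := hφ.apply_mul_rankOne_eq_zero hA hay
  simp only [huh, map_add, map_smul, smul_eq_mul] at hskew
  refine mul_left_cancel₀ hay ?_
  change _ = _ * -(g ((a : E →L[𝕜] E) u) + h ((a : E →L[𝕜] E) y))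
  linear_combination hskew

theorem isLinearMap [Infinite 𝕜] : IsLinearMap 𝕜 φ where
  map_add a b := by
    by_contra hne
    obtain ⟨y, g, hyg⟩ := exists_forall_mem_strongDual_apply_ne_zero
      (s := {φ (a + b) - (φ a + φ b), (a : E →L[𝕜] E), (b : E →L[𝕜] E), ((a + b : A) : E →L[𝕜] E)})
      (Set.toFinite _)
    obtain ⟨τ, hτ⟩ := hφ.exists_linearMap_eq_apply hA g y
    refine hyg (φ (a + b) - (φ a + φ b)) (by simp) (sub_ne_zero.mpr hne) ?_
    simp [hτ a (hyg _ (by simp)), hτ b (hyg _ (by simp)), hτ (a + b) (hyg _ (by simp))]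
  map_smul t a := by
    by_contra hne
    obtain ⟨y, g, hyg⟩ := exists_forall_mem_strongDual_apply_ne_zero
      (s := {φ (t • a) - t • φ a, (a : E →L[𝕜] E), ((t • a : A) : E →L[𝕜] E)}) (Set.toFinite _)
    obtain ⟨τ, hτ⟩ := hφ.exists_linearMap_eq_apply hA g y
    refine hyg (φ (t • a) - t • φ a) (by simp) (sub_ne_zero.mpr hne) ?_
    simp [hτ a (hyg _ (by simp)), hτ (t • a) (hyg _ (by simp))]

end IsOperationalTwoLocalDerivation

namespace IsOperationalTwoLocalDerivation

variable [NeZero (2 : 𝕜)] (hA : IsStandardOperatorAlgebra A) {φ : A →ₗ[𝕜] E →L[𝕜] E}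
  (hφ : IsOperationalTwoLocalDerivation φ)
include hA hφ

theorem leibnizDefect_rankOne_eq_zero (a : A) {f : StrongDual 𝕜 E} {z : E} (hz : f z ≠ 0) :
    leibnizDefect φ a (hA.rankOne f z) = 0 := by
  set r := hA.rankOne f z
  have hker : ∀ x, f x = 0 → leibnizDefect φ a r x = 0 := by
    intro x hx
    have hzero := hφ.leibnizDefect_mul_eq_zero a (b := r) (c := hA.rankOne f x)
      (by rw [hA.rankOne_mul_rankOne, hx, zero_smul])
    simpa [hz] using DFunLike.congr_fun hzero z
  have hrange : leibnizDefect φ a r z = 0 := by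
    have hzero := hφ.leibnizDefect_mul_self_eq_zero a hz (hA.rankOne_mul_rankOne f f z z)
    simpa [hz] using DFunLike.congr_fun hzero z
  ext x
  have hx := hker (x - (f x / f z) • z) (by simp [hz])
  simpa [hrange] using hx

theorem leibnizDefect_eq_zero_of_isStandardOperatorAlgebra [Infinite 𝕜] [IsTopologicalRing 𝕜]
    [SeparatingDual 𝕜 E] (a b : A) : leibnizDefect φ a b = 0 := by
  ext y
  rcases eq_or_ne y 0 with rfl | hy
  · simp
  rcases eq_or_ne ((b : E →L[𝕜] E) y) 0 with hby | hby
  · obtain ⟨f, hf⟩ := SeparatingDual.exists_eq_one (R := 𝕜) hy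
    have hzero := hφ.leibnizDefect_mul_eq_zero a (b := b) (c := hA.rankOne f y)
      (by ext; simp [hby])
    simpa [hf] using DFunLike.congr_fun hzero y
  · obtain ⟨f, hf⟩ := exists_strongDual_forall_apply_ne_zero (𝕜 := 𝕜)
      (v := ![y, (b : E →L[𝕜] E) y]) (by simp [Fin.forall_fin_two, hy, hby])
    have hfy : f y ≠ 0 := hf 0
    have hfby : f ((b : E →L[𝕜] E) y) ≠ 0 := hf 1
    have hzero := leibnizDefect_cocycle φ a b (hA.rankOne f y)
    rw [hφ.leibnizDefect_rankOne_eq_zero hA b hfy,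
      hφ.leibnizDefect_rankOne_eq_zero hA (a * b) hfy, hA.mul_rankOne,
      hφ.leibnizDefect_rankOne_eq_zero hA a hfby, mul_zero, sub_zero, add_zero] at hzero
    simpa [hfy] using DFunLike.congr_fun hzero y

end IsOperationalTwoLocalDerivation

end Operator

theorem rank_smulRight_lt_aleph0 {𝕜 E F : Type*} [Field 𝕜] [TopologicalSpace 𝕜] [AddCommGroup E]
    [Module 𝕜 E] [TopologicalSpace E] [AddCommGroup F] [Module 𝕜 F] [TopologicalSpace F]
    [ContinuousSMul 𝕜 F] (f : StrongDual 𝕜 E) (z : F) :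
    LinearMap.rank (f.smulRight z : E →ₗ[𝕜] F) < ℵ₀ :=
  (Submodule.rank_mono (LinearMap.range_comp_le_range (f : E →ₗ[𝕜] 𝕜)
    (LinearMap.toSpanSingleton 𝕜 F z))).trans_lt (Module.rank_lt_aleph0 𝕜 _)

theorem stmt2_general {𝕜 E : Type*} [Field 𝕜] [Infinite 𝕜] [NeZero (2 : 𝕜)] [TopologicalSpace 𝕜]
    [IsTopologicalRing 𝕜] [AddCommGroup E] [Module 𝕜 E] [TopologicalSpace E]
    [IsTopologicalAddGroup E] [ContinuousSMul 𝕜 E] [SeparatingDual 𝕜 E]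
    {A : NonUnitalSubalgebra 𝕜 (E →L[𝕜] E)} (hA : IsStandardOperatorAlgebra A)
    {φ : A → E →L[𝕜] E} (hφ : IsOperationalTwoLocalDerivation φ) : IsDerivation φ := by
  have hlin : IsLinearMap 𝕜 φ := hφ.isLinearMap hA
  refine ⟨hlin, fun a b ↦ ?_⟩
  have hdefect : leibnizDefect (hlin.mk' φ) a b = 0 :=
    IsOperationalTwoLocalDerivation.leibnizDefect_eq_zero_of_isStandardOperatorAlgebra hA hφ a b
  rwa [leibnizDefect_apply, sub_sub, sub_eq_zero] at hdefect

theorem stmt2 {E : Type*} [NormedAddCommGroup E] [NormedSpace ℂ E] [CompleteSpace E]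
    (A : Subalgebra ℂ (E →L[ℂ] E))
    -- `A` is a standard operator algebra: it contains every bounded finite-rank operator
    (hA : ∀ T : E →L[ℂ] E, LinearMap.rank (T : E →ₗ[ℂ] E) < ℵ₀ → T ∈ A)
    (φ : A → (E →L[ℂ] E))
    -- operational 2-local derivation condition
    (hφ : ∀ a b : A, ∃ D : A → (E →L[ℂ] E), IsLinearMap ℂ D ∧
      (∀ x y : A, D (x * y) = D x * (y : E →L[ℂ] E) + (x : E →L[ℂ] E) * D y) ∧
      φ a * (b : E →L[ℂ] E) + (a : E →L[ℂ] E) * φ b = D (a * b)) :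
    IsLinearMap ℂ φ ∧
      ∀ a b : A, φ (a * b) = φ a * (b : E →L[ℂ] E) + (a : E →L[ℂ] E) * φ b := by
  have hderiv : IsDerivation (A := A.toNonUnitalSubalgebra) φ :=
    stmt2_general (fun f z ↦ hA _ (rank_smulRight_lt_aleph0 f z)) fun a b ↦
      let ⟨D, hlin, hleibniz, hφD⟩ := hφ a b
      ⟨D, ⟨hlin, hleibniz⟩, hφD⟩
  exact ⟨hderiv.toIsLinearMap, hderiv.leibniz⟩
end

section
/- Let A be a standard operator algebra on a complex Banach space E. Fix integers m, k with k ≥ 2 and a sequence (i_1, …, i_m) with {i_1, …, i_m} = {1, …, k} such that some index i_p is different from i_q for all q ≠ p; define the generalized product T_1 * ⋯ * T_k = T_{i_1}T_{i_2}⋯T_{i_m}. Let φ : A → A be a (not necessarily linear, additive or continuous) map whose range contains all bounded operators on E of rank at most two. Suppose for any a_1, …, a_k ∈ A, in which at least one a_j has rank at most one, there is an algebra automorphism θ of A with φ(a_1) * ⋯ * φ(a_k) = θ(a_1 * ⋯ * a_k). Then there is a complex scalar ξ with ξ^m = 1 such that either there is an invertible operator S ∈ B(E) with φ(a) = ξ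 S a S⁻¹ for all a ∈ A, or there is an invertible bounded linear operator S from the continuous dual E′ onto E with φ(a) = ξ S a′ S⁻¹ for all a ∈ A, where a′ : E′ → E′ denotes the dual (adjoint) map of a. -/
set_option synthInstance.maxHeartbeats 1000000
set_option maxHeartbeats 1000000

open Cardinal ContinuousLinearMap

/-- The dual (adjoint) map `a' : E' → E'`, `f ↦ f ∘ a`, of a bounded operator `a` on `E`. -/
noncomputable def dualOp {E : Type*} [NormedAddCommGroup E] [NormedSpace ℂ E]
    (a : E →L[ℂ] E) : (E →L[ℂ] ℂ) →L[ℂ] (E →L[ℂ] ℂ) :=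
  (ContinuousLinearMap.compL ℂ E E ℂ).flip a

/-! The algebra automorphisms of `A` preserve the trace of operators of rank one. Evaluating the
product condition at two operators only, with the index occurring once treated separately, gives
`tr (φ r ^ (m - 1) * φ a) = tr (r ^ (m - 1) * a)` for every `r` of rank one; that `φ r` has rank at
most one follows from testing it against operators of rank two.

For `f u ≠ 0` this says that the linear form `a ↦ f (a u)` is computed from `φ a` by a rank-one
operator `B u f`, that is `tr (B u f * φ a) = f (a u)`. Since the range of `φ` separates operators
of rank one, `B` extends to a bilinear map in `u` and `f`. Comparing traces once more,
`tr (B u f * B u' f')` is proportional to `f' u * f u'`. A bilinear family of operators of rank at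
most one with this property is, up to transposition, a family of tensors `S u ⊗ C f` or
`S f ⊗ C u`; then `S` intertwines `a` or its dual with `φ a` up to a scalar `ξ`, which satisfies
`ξ ^ m = 1` because `tr (B u f) ^ m = f u ^ m`. Continuity of `S` is the closed graph theorem.
-/

section LinearAlgebra

theorem linearMap_ext_of_notMem {R M N : Type*} [Ring R] [AddCommGroup M] [Module R M]
    [AddCommGroup N] [Module R N] {P : Submodule R M} (hP : P ≠ ⊤) {f g : M →ₗ[R] N}
    (h : ∀ x ∉ P, f x = g x) : f = g := by
  ext x
  obtain ⟨y, hy⟩ := SetLike.exists_not_mem_of_ne_top P hP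
  by_cases hx : x ∈ P
  · have hxy := h (x + y) fun hmem => hy ((P.add_mem_iff_right hx).1 hmem)
    rwa [map_add, map_add, h y hy, add_left_inj] at hxy
  · exact h x hx

theorem eq_zero_or_eq_zero_of_forall_apply {R M N N' : Type*} [Ring R] [AddCommGroup M]
    [Module R M] [AddCommGroup N] [Module R N] [AddCommGroup N'] [Module R N'] {f : M →ₗ[R] N}
    {g : M →ₗ[R] N'} (h : ∀ x, f x = 0 ∨ g x = 0) : f = 0 ∨ g = 0 := by
  refine or_iff_not_imp_left.2 fun hf => linearMap_ext_of_notMem (P := f.ker) ?_ fun x hx => ?_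
  · rwa [Ne, LinearMap.ker_eq_top]
  · exact (h x).resolve_left hx

variable {K U V W Z : Type*} [Field K] [AddCommGroup U] [Module K U] [AddCommGroup V] [Module K V]
  [AddCommGroup W] [Module K W] [AddCommGroup Z] [Module K Z] {q : U →ₗ[K] V →ₗ[K] K}

theorem bilinear_ext_of_ne_zero (hq : q ≠ 0) {B B' : U →ₗ[K] V →ₗ[K] W}
    (h : ∀ u v, q u v ≠ 0 → B u v = B' u v) : B = B' := by
  refine linearMap_ext_of_notMem (P := q.ker) (by rwa [Ne, LinearMap.ker_eq_top]) fun u hu => ?_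
  exact linearMap_ext_of_notMem (P := (q u).ker) (by rwa [Ne, LinearMap.ker_eq_top]) fun v => h u v

theorem exists_bilinear_lift (hq : q ≠ 0) {J : W →ₗ[K] Z} (hJ : Function.Injective J)
    {b : U →ₗ[K] V →ₗ[K] Z} (h : ∀ u v, q u v ≠ 0 → b u v ∈ J.range) :
    ∃ B : U →ₗ[K] V →ₗ[K] W, ∀ u v, J (B u v) = b u v := by
  have hzero : b.compr₂ J.range.mkQ = 0 := bilinear_ext_of_ne_zero hq fun u v huv => by
    simpa using h u v huv
  have hmem (u v) : b u v ∈ J.range := by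
    simpa using LinearMap.congr_fun₂ hzero u v
  obtain ⟨L, hL⟩ := J.exists_leftInverse_of_injective (LinearMap.ker_eq_bot.2 hJ)
  refine ⟨b.compr₂ L, fun u v => ?_⟩
  obtain ⟨w, hw⟩ := hmem u v
  rw [LinearMap.compr₂_apply, ← hw, ← LinearMap.comp_apply L J, hL, LinearMap.id_apply]

theorem bilinear_eq_smul_of_eq_zero_imp {l : U →ₗ[K] V →ₗ[K] K}
    (h : ∀ u v, l u v = 0 → q u v = 0) : ∃ c : K, q = c • l := by
  by_cases hl : ∃ u₀ v₀, l u₀ v₀ ≠ 0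
  swap
  · push Not at hl
    exact ⟨0, LinearMap.ext₂ fun u v => by simp [h u v (hl u v)]⟩
  obtain ⟨u₁, v₀, hl₁⟩ := hl
  obtain ⟨u₀, hl₀⟩ : ∃ u₀, l u₀ v₀ = 1 := ⟨(l u₁ v₀)⁻¹ • u₁, by simp [hl₁]⟩
  refine ⟨q u₀ v₀, LinearMap.ext₂ fun u v => ?_⟩
  set x := u - l u v₀ • u₀
  set y := v - l u₀ v • v₀
  have hx := h x v₀ (by simp [x, hl₀])
  have hy := h u₀ y (by simp [y, hl₀])
  have hxy := h (x - l x y • u₀) (y + v₀) (by simp [x, y, hl₀])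
  simp only [x, y, map_sub, map_add, map_smul, LinearMap.sub_apply, LinearMap.smul_apply,
    smul_eq_mul, hl₀] at hx hy hxy ⊢
  linear_combination hxy + (l u₀ v - 1) * hx + (l u v₀ + l u v - l u v₀ * l u₀ v) * hy

end LinearAlgebra

section RankOne

variable {𝕜 E F : Type*} [NontriviallyNormedField 𝕜] [NormedAddCommGroup E] [NormedSpace 𝕜 E]
  [NormedAddCommGroup F] [NormedSpace 𝕜 F]

theorem rank_smulRight_le (f : E →L[𝕜] 𝕜) (v : F) :
    (f.smulRight v : E →ₗ[𝕜] F).rank ≤ 1 := by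
  have hrange : ((f.smulRight v : E →L[𝕜] F) : E →ₗ[𝕜] F).range ≤ 𝕜 ∙ v := by
    rintro _ ⟨x, rfl⟩
    exact Submodule.mem_span_singleton.2 ⟨f x, rfl⟩
  exact (Submodule.rank_mono hrange).trans (rank_span_le _ |>.trans_eq (mk_singleton v))

theorem rank_smulRight_add_smulRight_le (f g : E →L[𝕜] 𝕜) (v w : F) :
    (f.smulRight v + g.smulRight w : E →L[𝕜] F).toLinearMap.rank ≤ 2 :=
  (LinearMap.rank_add_le _ _).trans <|
    (add_le_add (rank_smulRight_le f v) (rank_smulRight_le g w)).trans_eq one_add_one_eq_two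

theorem smulRight_eq_zero_iff {f : E →L[𝕜] 𝕜} {v : F} : f.smulRight v = 0 ↔ f = 0 ∨ v = 0 := by
  refine ⟨fun h => ?_, ?_⟩
  · by_contra! hne
    obtain ⟨x, hx⟩ := DFunLike.ne_iff.1 hne.1
    exact (smul_ne_zero hx hne.2) (DFunLike.congr_fun h x)
  · rintro (rfl | rfl) <;> ext <;> simp

theorem exists_dual_ne_zero_and_ne_zero [SeparatingDual 𝕜 E] {x y : E} (hx : x ≠ 0) (hy : y ≠ 0) :
    ∃ f : E →L[𝕜] 𝕜, f x ≠ 0 ∧ f y ≠ 0 := by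
  obtain ⟨f, hfx, hfy⟩ := SeparatingDual.exists_eq_one_ne_zero_of_ne_zero_pair (R := 𝕜) hx hy
  exact ⟨f, by simp [hfx], hfy⟩

theorem apply_eq_apply_of_smulRight_eq {f f' : E →L[𝕜] 𝕜} {v v' : F}
    (h : f.smulRight v = f'.smulRight v') (X : F →L[𝕜] E) : f (X v) = f' (X v') := by
  have key (x : E) : f x • v = f' x • v' := DFunLike.congr_fun h x
  have h₁ := congrArg (f ∘L X) (key (X v))
  have h₂ := congrArg (f ∘L X) (key (X v'))
  have h₃ := congrArg (f' ∘L X) (key (X v))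
  have h₄ := congrArg (f' ∘L X) (key (X v'))
  simp only [map_smul, smul_eq_mul, comp_apply] at h₁ h₂ h₃ h₄
  generalize f (X v) = a, f (X v') = b, f' (X v) = c, f' (X v') = d at *
  have h₅ : (a - d) ^ 3 = 0 := by
    grind
  exact sub_eq_zero.1 (pow_eq_zero_iff three_ne_zero |>.1 h₅)

theorem exists_eq_smulRight_of_minors [SeparatingDual 𝕜 F] {T : E →L[𝕜] F}
    (h : ∀ (g : F →L[𝕜] 𝕜) x y, g (T x) • T y = g (T y) • T x) :
    ∃ (f : E →L[𝕜] 𝕜) (v : F), T = f.smulRight v := by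
  by_cases hT : ∃ x, T x ≠ 0
  · obtain ⟨x, hx⟩ := hT
    obtain ⟨g, hg⟩ := SeparatingDual.exists_eq_one (R := 𝕜) hx
    exact ⟨g ∘L T, T x, by ext y; simpa [hg] using h g x y⟩
  · exact ⟨0, 0, by ext y; simpa using not_exists_not.1 hT y⟩

theorem minors_of_rank_le_one {T : E →L[𝕜] F} (hT : (T : E →ₗ[𝕜] F).rank ≤ 1) (g : F →L[𝕜] 𝕜)
    (x y : E) : g (T x) • T y = g (T y) • T x := by
  obtain ⟨v, hv⟩ := (rank_submodule_le_one_iff' _).1 hT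
  obtain ⟨a, ha⟩ := Submodule.mem_span_singleton.1 (hv ⟨x, rfl⟩)
  obtain ⟨b, hb⟩ := Submodule.mem_span_singleton.1 (hv ⟨y, rfl⟩)
  rw [ContinuousLinearMap.coe_coe] at ha hb
  rw [← ha, ← hb]
  simp only [map_smul, smul_eq_mul]
  module

variable [SeparatingDual 𝕜 F] {T : E →L[𝕜] F}

theorem rank_le_one_iff_exists_eq_smulRight :
    (T : E →ₗ[𝕜] F).rank ≤ 1 ↔ ∃ (f : E →L[𝕜] 𝕜) (v : F), T = f.smulRight v :=
  ⟨fun h => exists_eq_smulRight_of_minors (minors_of_rank_le_one h), by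
    rintro ⟨f, v, rfl⟩
    exact rank_smulRight_le f v⟩

theorem rank_le_one_iff_minors :
    (T : E →ₗ[𝕜] F).rank ≤ 1 ↔ ∀ (g : F →L[𝕜] 𝕜) x y, g (T x) • T y = g (T y) • T x :=
  ⟨minors_of_rank_le_one, fun h =>
    rank_le_one_iff_exists_eq_smulRight.2 (exists_eq_smulRight_of_minors h)⟩

theorem exists_linearIndependent_of_one_lt_rank (hT : ¬ (T : E →ₗ[𝕜] F).rank ≤ 1) :
    ∃ x y, LinearIndependent 𝕜 ![T x, T y] := by
  obtain ⟨g, x, y, hne⟩ : ∃ (g : F →L[𝕜] 𝕜) (x y : E), g (T x) • T y ≠ g (T y) • T x := by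
    simpa only [rank_le_one_iff_minors, not_forall] using hT
  refine ⟨x, y, (LinearIndependent.pair_iff' fun hx => hne (by simp [hx])).2 fun a ha => hne ?_⟩
  rw [← ha, map_smul, smul_eq_mul, mul_comm, mul_smul]

theorem isClosed_setOf_rank_le_one :
    IsClosed {T : E →L[𝕜] F | (T : E →ₗ[𝕜] F).rank ≤ 1} := by
  simp only [rank_le_one_iff_minors, Set.ofPred_forall]
  refine isClosed_iInter fun g => isClosed_iInter fun x => isClosed_iInter fun y => ?_
  exact isClosed_eq (by fun_prop) (by fun_prop)

end RankOne

section RankTest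

variable {𝕜 E F : Type*} [NontriviallyNormedField 𝕜] [NormedAddCommGroup E] [NormedSpace 𝕜 E]
  [NormedAddCommGroup F] [NormedSpace 𝕜 F]

theorem exists_mem_span_pair_ne_zero_apply_eq_zero [SeparatingDual 𝕜 F] {T : E →L[𝕜] F}
    (hT : (T : E →ₗ[𝕜] F).rank ≤ 1) {x y : E} (hxy : LinearIndependent 𝕜 ![x, y]) :
    ∃ v ∈ Submodule.span 𝕜 {x, y}, v ≠ 0 ∧ T v = 0 := by
  obtain ⟨f, w, rfl⟩ := rank_le_one_iff_exists_eq_smulRight.1 hT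
  by_cases hfx : f x = 0
  · exact ⟨x, Submodule.mem_span_pair.2 ⟨1, 0, by simp⟩, hxy.ne_zero 0, by simp [hfx]⟩
  · refine ⟨f y • x - f x • y, Submodule.mem_span_pair.2 ⟨f y, -f x, by module⟩,
      fun h => hfx ?_, ?_⟩
    · exact neg_eq_zero.1 (LinearIndependent.pair_iff.1 hxy (f y) (-f x) (by rw [← h]; module)).2
    · simp [mul_comm]

theorem eq_zero_of_mem_span_pair {h k : E →L[𝕜] 𝕜} {x y v : E} (hx : h x ≠ 0)
    (hk : k (h x • y - h y • x) ≠ 0) (hv : v ∈ Submodule.span 𝕜 {x, y}) (hhv : h v = 0)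
    (hkv : k v = 0) : v = 0 := by
  obtain ⟨a, b, rfl⟩ := Submodule.mem_span_pair.1 hv
  simp only [map_add, map_sub, map_smul, smul_eq_mul] at hk hhv hkv
  have hb : b = 0 := by
    refine (mul_eq_zero.1 ?_).resolve_right hk
    linear_combination h x * hkv - k x * hhv
  have ha : a = 0 := by simpa [hb, hx] using hhv
  simp [ha, hb]

theorem exists_dual_pair_separating_spans [SeparatingDual 𝕜 E] {x y x' y' : E}
    (hxy : LinearIndependent 𝕜 ![x, y]) (hxy' : LinearIndependent 𝕜 ![x', y']) :
    ∃ h k : E →L[𝕜] 𝕜, ∀ v, v ∈ Submodule.span 𝕜 {x, y} ∨ v ∈ Submodule.span 𝕜 {x', y'} →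
      h v = 0 → k v = 0 → v = 0 := by
  obtain ⟨h, hx, hx'⟩ :=
    exists_dual_ne_zero_and_ne_zero (𝕜 := 𝕜) (hxy.ne_zero 0) (hxy'.ne_zero 0)
  have comb_ne_zero {a b : E} (hab : LinearIndependent 𝕜 ![a, b]) (ha : h a ≠ 0) :
      h a • b - h b • a ≠ 0 := fun h₀ =>
    ha (LinearIndependent.pair_iff.1 hab (-h b) (h a) (by rw [← h₀]; module)).2
  obtain ⟨k, hk, hk'⟩ :=
    exists_dual_ne_zero_and_ne_zero (𝕜 := 𝕜) (comb_ne_zero hxy hx) (comb_ne_zero hxy' hx')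
  exact ⟨h, k, fun v hv => hv.elim (eq_zero_of_mem_span_pair hx hk)
    (eq_zero_of_mem_span_pair hx' hk')⟩

theorem exists_rank_le_two_forall_one_lt_rank_pow_mul_mul_pow [SeparatingDual 𝕜 E] {T : E →L[𝕜] E}
    (hT : ¬ (T : E →ₗ[𝕜] E).rank ≤ 1) :
    ∃ Q : E →L[𝕜] E, (Q : E →ₗ[𝕜] E).rank ≤ 2 ∧
      ∀ s t : ℕ, ¬ ((Q ^ s * T * Q ^ t : E →L[𝕜] E) : E →ₗ[𝕜] E).rank ≤ 1 := by
  obtain ⟨x, y, hTxy⟩ := exists_linearIndependent_of_one_lt_rank hT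
  have hxy : LinearIndependent 𝕜 ![x, y] :=
    LinearIndependent.pair_iff.2 fun a b hab =>
      LinearIndependent.pair_iff.1 hTxy a b (by simpa using congrArg T hab)
  obtain ⟨h, k, hhk⟩ := exists_dual_pair_separating_spans hxy hTxy
  set M := Submodule.span 𝕜 {x, y}
  set M' := Submodule.span 𝕜 {T x, T y}
  set Q : E →L[𝕜] E := h.smulRight x + k.smulRight y
  have hQ : Set.MapsTo Q {v | (v ∈ M ∨ v ∈ M') ∧ v ≠ 0} {v | v ∈ M ∧ v ≠ 0} := by
    rintro v ⟨hv, hv₀⟩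
    refine ⟨Submodule.mem_span_pair.2 ⟨h v, k v, rfl⟩, fun hQv => hv₀ (hhk v hv ?_ ?_)⟩
    · exact (LinearIndependent.pair_iff.1 hxy _ _ hQv).1
    · exact (LinearIndependent.pair_iff.1 hxy _ _ hQv).2
  have hT_mem : Set.MapsTo T {v | v ∈ M ∧ v ≠ 0} {v | (v ∈ M ∨ v ∈ M') ∧ v ≠ 0} := by
    rintro v ⟨hv, hv₀⟩
    obtain ⟨a, b, rfl⟩ := Submodule.mem_span_pair.1 hv
    refine ⟨Or.inr (Submodule.mem_span_pair.2 ⟨a, b, by simp⟩), fun hTv => hv₀ ?_⟩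
    obtain ⟨rfl, rfl⟩ := LinearIndependent.pair_iff.1 hTxy a b (by simpa using hTv)
    simp
  refine ⟨Q, rank_smulRight_add_smulRight_le h k x y, fun s t hrank => ?_⟩
  obtain ⟨v, hvM, hv₀, hv⟩ := exists_mem_span_pair_ne_zero_apply_eq_zero hrank hxy
  have hN : {v | v ∈ M ∧ v ≠ 0} ⊆ {v | (v ∈ M ∨ v ∈ M') ∧ v ≠ 0} := fun v hv => ⟨Or.inl hv.1, hv.2⟩
  have hQv := (hQ.mono_left hN).iterate t ⟨hvM, hv₀⟩
  have hQTQv := (hQ.mono_right hN).iterate s (hT_mem hQv)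
  exact hQTQv.2 (by simpa [FunLike.coe_pow_eq_iterate] using hv)

end RankTest

section TraceFormulas

variable {𝕜 E : Type*} [NontriviallyNormedField 𝕜] [NormedAddCommGroup E] [NormedSpace 𝕜 E]

theorem algEquiv_smulRight [SeparatingDual 𝕜 E] {A : Subalgebra 𝕜 (E →L[𝕜] E)}
    (hA : ∀ (f : E →L[𝕜] 𝕜) (v : E), f.smulRight v ∈ A) (θ : A ≃ₐ[𝕜] A) {r : A}
    {f : E →L[𝕜] 𝕜} {v : E} (hr : (r : E →L[𝕜] E) = f.smulRight v) :
    ∃ (g : E →L[𝕜] 𝕜) (w : E), (θ r : E →L[𝕜] E) = g.smulRight w ∧ g w = f v := by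
  have hmul (b : A) : r * b * r = f ((b : E →L[𝕜] E) v) • r :=
    Subtype.ext <| by ext; simpa [hr] using smul_comm _ _ _
  obtain hr₀ | ⟨e, he⟩ := forall_or_exists_not fun x => (θ r : E →L[𝕜] E) x = 0
  · have hr' : f.smulRight v = 0 := by
      rw [← hr, (map_eq_zero_iff θ θ.injective).1 (Subtype.ext (ContinuousLinearMap.ext hr₀))]
      rfl
    refine ⟨0, 0, by ext x; simp [hr₀ x], ?_⟩
    rcases smulRight_eq_zero_iff.1 hr' with rfl | rfl <;> simp
  obtain ⟨h, hh⟩ := SeparatingDual.exists_eq_one (R := 𝕜) he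
  obtain ⟨b, hb⟩ := θ.surjective ⟨h.smulRight e, hA h e⟩
  have hSbS (x : E) :
      h ((θ r : E →L[𝕜] E) x) • (θ r : E →L[𝕜] E) e =
        f ((b : E →L[𝕜] E) v) • (θ r : E →L[𝕜] E) x := by
    have := congrArg (fun a : A => (θ a : E →L[𝕜] E) x) (hmul b)
    simpa [hb] using this
  have hα : f ((b : E →L[𝕜] E) v) = 1 := by
    simpa [hh, eq_comm] using congrArg h (hSbS e)
  have hSS : (θ r : E →L[𝕜] E) ((θ r : E →L[𝕜] E) e) = f v • (θ r : E →L[𝕜] E) e := by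
    have := congrArg (fun a : A => (θ a : E →L[𝕜] E) e) (hmul 1)
    simpa using this
  refine ⟨h ∘L θ r, (θ r : E →L[𝕜] E) e, ?_, by simp [hSS, hh]⟩
  ext x
  simpa [hα] using (hSbS x).symm

theorem smulRight_pow_apply_self (f : E →L[𝕜] 𝕜) (v : E) (n : ℕ) :
    (f.smulRight v ^ n : E →L[𝕜] E) v = f v ^ n • v := by
  induction n with
  | zero => simp
  | succ n ih => rw [pow_succ', mul_apply_eq_comp, ih]; simp [pow_succ, mul_smul]

theorem apply_smulRight_pow (f : E →L[𝕜] 𝕜) (v w : E) (n : ℕ) :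
    f ((f.smulRight v ^ n : E →L[𝕜] E) w) = f v ^ n * f w := by
  induction n with
  | zero => simp
  | succ n ih =>
    rw [pow_succ', mul_apply_eq_comp, smulRight_apply, map_smul, ih, smul_eq_mul]
    ring

theorem exists_smulRight_eq_pow_mul_mul_pow (f : E →L[𝕜] 𝕜) (v : E) (X : E →L[𝕜] E) {s t N : ℕ}
    (hst : s + t = N + 1) :
    ∃ (g : E →L[𝕜] 𝕜) (w : E), f.smulRight v ^ s * X * f.smulRight v ^ t = g.smulRight w ∧
      g w = f v ^ N * f (X v) := by
  have trace (s t : ℕ) :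
      f ((f.smulRight v ^ s * X * f.smulRight v ^ t) v) = f v ^ (s + t) * f (X v) := by
    simp only [mul_apply_eq_comp, smulRight_pow_apply_self, map_smul, apply_smulRight_pow,
      smul_eq_mul]
    ring
  obtain ⟨s, rfl⟩ | ⟨t, rfl⟩ : (∃ s', s = s' + 1) ∨ ∃ t', t = t' + 1 := by
    rcases s with _ | s
    · exact Or.inr ⟨N, by omega⟩
    · exact Or.inl ⟨s, rfl⟩
  · refine ⟨f ∘L (f.smulRight v ^ s * X * f.smulRight v ^ t), v, ?_, ?_⟩
    · rw [pow_succ', mul_assoc, mul_assoc, ← mul_assoc _ X]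
      rfl
    · rw [comp_apply, trace, show s + t = N by omega]
  · refine ⟨f, (f.smulRight v ^ s * X * f.smulRight v ^ t) v, ?_, ?_⟩
    · rw [pow_succ, ← mul_assoc]
      ext
      simp
    · rw [trace, show s + t = N by omega]

end TraceFormulas

section PowTrace

variable {𝕜 E F X : Type*} [NontriviallyNormedField 𝕜] [NormedAddCommGroup E] [NormedSpace 𝕜 E]
  [NormedAddCommGroup F] [NormedSpace 𝕜 F]

/-- `Φ` maps operators of rank one (as represented by `ι`) to operators of rank at most one, and
`tr ((Φ r) ^ (N + 1) * Φ a) = tr ((ι r) ^ (N + 1) * ι a)` for all such `r` and all `a`. Since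
`(f.smulRight u) ^ (N + 1) = (f u) ^ N • f.smulRight u` and `tr (f.smulRight u * X) = f (X u)`,
the two traces are written out as scalars. -/
def PreservesPowTrace (N : ℕ) (ι : X → E →L[𝕜] E) (Φ : X → F →L[𝕜] F) : Prop :=
  ∀ r (f : E →L[𝕜] 𝕜) u, ι r = f.smulRight u → ∃ (g : F →L[𝕜] 𝕜) (v : F), Φ r = g.smulRight v ∧
    ∀ a, g v ^ N * g (Φ a v) = f u ^ N * f (ι a u)

theorem rank_le_one_of_forall_exists_algEquiv [SeparatingDual 𝕜 E] {A : Subalgebra 𝕜 (E →L[𝕜] E)}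
    (hA : ∀ (f : E →L[𝕜] 𝕜) (v : E), f.smulRight v ∈ A) {φ : A → A} {s t : ℕ}
    (hrange : ∀ T : E →L[𝕜] E, (T : E →ₗ[𝕜] E).rank ≤ 2 → ∃ a : A, (φ a : E →L[𝕜] E) = T) {r : A}
    (hφ : ∀ b, ∃ θ : A ≃ₐ[𝕜] A, φ b ^ s * φ r * φ b ^ t = θ (b ^ s * r * b ^ t))
    (hr : ((r : E →L[𝕜] E) : E →ₗ[𝕜] E).rank ≤ 1) :
    ((φ r : E →L[𝕜] E) : E →ₗ[𝕜] E).rank ≤ 1 := by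
  by_contra hφr
  obtain ⟨Q, hQ, hQr⟩ := exists_rank_le_two_forall_one_lt_rank_pow_mul_mul_pow hφr
  obtain ⟨b, rfl⟩ := hrange Q hQ
  obtain ⟨θ, hθ⟩ := hφ b
  have hbr : (((b ^ s * r * b ^ t : A) : E →L[𝕜] E) : E →ₗ[𝕜] E).rank ≤ 1 :=
    (LinearMap.rank_comp_le_left _ _).trans <| (LinearMap.rank_comp_le_right _ _).trans hr
  obtain ⟨f, u, hfu⟩ := rank_le_one_iff_exists_eq_smulRight.1 hbr
  obtain ⟨g, v, hgv, -⟩ := algEquiv_smulRight hA θ hfu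
  refine hQr s t (rank_le_one_iff_exists_eq_smulRight.2 ⟨g, v, ?_⟩)
  rw [← hgv, ← hθ]
  rfl

theorem preservesPowTrace_of_forall_exists_algEquiv [SeparatingDual 𝕜 E]
    {A : Subalgebra 𝕜 (E →L[𝕜] E)} (hA : ∀ (f : E →L[𝕜] 𝕜) (v : E), f.smulRight v ∈ A) {φ : A → A}
    {s t N : ℕ} (hst : s + t = N + 1)
    (hrange : ∀ T : E →L[𝕜] E, (T : E →ₗ[𝕜] E).rank ≤ 2 → ∃ a : A, (φ a : E →L[𝕜] E) = T)
    (hφ : ∀ a b : A, ((a : E →L[𝕜] E) : E →ₗ[𝕜] E).rank ≤ 1 ∨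
      ((b : E →L[𝕜] E) : E →ₗ[𝕜] E).rank ≤ 1 →
        ∃ θ : A ≃ₐ[𝕜] A, φ b ^ s * φ a * φ b ^ t = θ (b ^ s * a * b ^ t)) :
    PreservesPowTrace N (fun a : A => (a : E →L[𝕜] E)) (fun a => (φ a : E →L[𝕜] E)) := by
  intro r f u (hr : (r : E →L[𝕜] E) = f.smulRight u)
  have hr₁ : ((r : E →L[𝕜] E) : E →ₗ[𝕜] E).rank ≤ 1 := by
    rw [hr]
    exact rank_smulRight_le f u
  obtain ⟨g, v, hgv⟩ := rank_le_one_iff_exists_eq_smulRight.1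
    (rank_le_one_of_forall_exists_algEquiv hA hrange (fun b => hφ r b (.inl hr₁)) hr₁)
  refine ⟨g, v, hgv, fun a => ?_⟩
  obtain ⟨θ, hθ⟩ := hφ a r (.inr hr₁)
  obtain ⟨f₁, u₁, hfu₁, hf₁⟩ := exists_smulRight_eq_pow_mul_mul_pow f u a hst
  obtain ⟨g₁, v₁, hgv₁, hg₁⟩ := exists_smulRight_eq_pow_mul_mul_pow g v (φ a) hst
  obtain ⟨g₂, v₂, hgv₂, hg₂⟩ := algEquiv_smulRight hA θ (r := r ^ s * a * r ^ t) (f := f₁)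
    (v := u₁) (by simpa [hr] using hfu₁)
  have hθ' : g₁.smulRight v₁ = g₂.smulRight v₂ := by
    rw [← hgv₁, ← hgv₂, ← hθ, ← hgv]
    rfl
  rw [← hg₁, ← hf₁, ← hg₂]
  exact apply_eq_apply_of_smulRight_eq hθ' (.id 𝕜 E)

theorem PreservesPowTrace.exists_smulRight_eq_smul {N : ℕ} {ι : X → E →L[𝕜] E} {Φ : X → F →L[𝕜] F}
    (hΦ : PreservesPowTrace N ι Φ) {r : X} {f : E →L[𝕜] 𝕜} {u : E} (hr : ι r = f.smulRight u)
    (hfu : f u ≠ 0) :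
    ∃ (c : 𝕜) (h : F →L[𝕜] 𝕜) (w : F), c ≠ 0 ∧ h.smulRight w = c • Φ r ∧
      h w ^ (N + 2) = f u ^ (N + 2) ∧ ∀ a, h (Φ a w) = f (ι a u) := by
  obtain ⟨g, v, hgv, hg⟩ := hΦ r f u hr
  have hpow : g v ^ (N + 2) = f u ^ (N + 2) := by
    have := hg r
    rw [hr, hgv] at this
    simp only [smulRight_apply, map_smul, smul_eq_mul] at this
    linear_combination this
  have hgv₀ : g v ≠ 0 := fun h₀ => by
    simp [h₀, hfu, eq_comm (a := (0 : 𝕜))] at hpow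
  have hroot : (g v / f u) ^ (N + 2) = 1 := by rw [div_pow, hpow, div_self (pow_ne_zero _ hfu)]
  refine ⟨(g v / f u) ^ N, g, (g v / f u) ^ N • v, pow_ne_zero _ (div_ne_zero hgv₀ hfu), ?_, ?_,
    fun a => ?_⟩
  · ext
    simpa [hgv] using smul_comm _ _ _
  · calc g ((g v / f u) ^ N • v) ^ (N + 2) = ((g v / f u) ^ (N + 2)) ^ N * g v ^ (N + 2) := by
          rw [map_smul, smul_eq_mul]; ring
      _ = f u ^ (N + 2) := by rw [hroot, one_pow, one_mul, hpow]
  · rw [map_smul, map_smul, smul_eq_mul, div_pow, div_mul_eq_mul_div, hg a,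
      mul_div_cancel_left₀ _ (pow_ne_zero N hfu)]

end PowTrace

section TraceRealization

variable {𝕜 F U V : Type*} [NontriviallyNormedField 𝕜] [NormedAddCommGroup F] [NormedSpace 𝕜 F]
  [AddCommGroup U] [Module 𝕜 U] [AddCommGroup V] [Module 𝕜 V]

/-- The bilinear family `B` of operators of rank at most one multiplies, up to scalars and on the
level of traces, like the rank-one tensors `u ⊗ v` with the pairing `q`: if `q u v ≠ 0`, then
`tr (B u v * B u' v')` is a nonzero multiple of `tr ((u ⊗ v) (u' ⊗ v')) = q u v' * q u' v`. -/
structure TraceRealizes (q : U →ₗ[𝕜] V →ₗ[𝕜] 𝕜) (B : U →ₗ[𝕜] V →ₗ[𝕜] F →L[𝕜] F) : Prop where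
  rank_le_one : ∀ u v, (B u v : F →ₗ[𝕜] F).rank ≤ 1
  trace_mul : ∀ u v, q u v ≠ 0 → ∃ c : 𝕜, c ≠ 0 ∧ ∀ (h : F →L[𝕜] 𝕜) (w : F),
    B u v = h.smulRight w → ∀ u' v', h (B u' v' w) = c * (q u v' * q u' v)

/-- A point at which the pairing `q` is normalised and the operator `B u₀ v₀` of a trace
realization is written as a multiple `c` of the rank-one projection `g.smulRight e`. -/
structure IsBasePoint (q : U →ₗ[𝕜] V →ₗ[𝕜] 𝕜) (B : U →ₗ[𝕜] V →ₗ[𝕜] F →L[𝕜] F) (u₀ : U) (v₀ : V)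
    (c : 𝕜) (g : F →L[𝕜] 𝕜) (e : F) : Prop where
  pairing : q u₀ v₀ = 1
  ne_zero : c ≠ 0
  dual_apply : g e = 1
  apply_base : ∀ z, B u₀ v₀ z = (c * g z) • e
  trace_apply : ∀ u v, g (B u v e) = c * (q u₀ v * q u v₀)

variable {q : U →ₗ[𝕜] V →ₗ[𝕜] 𝕜} {B : U →ₗ[𝕜] V →ₗ[𝕜] F →L[𝕜] F}

namespace TraceRealizes

theorem flip (hB : TraceRealizes q B) : TraceRealizes q.flip B.flip where
  rank_le_one u v := hB.rank_le_one v u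
  trace_mul u v huv := by
    obtain ⟨c, hc, h⟩ := hB.trace_mul v u huv
    exact ⟨c, hc, fun k w hkw u' v' => by simpa [mul_comm] using h k w hkw v' u'⟩

variable [SeparatingDual 𝕜 F]

theorem eq_zero_or_eq_zero (hB : TraceRealizes q B) (hq : q.Nondegenerate) {u : U} {v : V}
    (huv : B u v = 0) : u = 0 ∨ v = 0 := by
  by_contra! hne
  obtain ⟨v', hv'⟩ := not_forall.1 fun h => hne.1 (hq.1 u h)
  obtain ⟨u', hu'⟩ := not_forall.1 fun h => hne.2 (hq.2 v h)
  have hq₀ : q ≠ 0 := fun h => hv' (by simp [h])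
  have hzero : (LinearMap.mul 𝕜 𝕜).compl₁₂ (q.flip v) (q u) = 0 :=
    bilinear_ext_of_ne_zero hq₀ fun x y hxy => by
      obtain ⟨h, w, hhw⟩ := rank_le_one_iff_exists_eq_smulRight.1 (hB.rank_le_one x y)
      obtain ⟨c, hc, htr⟩ := hB.trace_mul x y hxy
      simpa [huv, hc] using (htr h w hhw u v).symm
  have huv' : q u' v * q u v' = 0 := LinearMap.congr_fun₂ hzero u' v'
  exact mul_ne_zero hu' hv' huv'

theorem exists_isBasePoint (hB : TraceRealizes q B) (hq : q ≠ 0) :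
    ∃ u₀ v₀ c g e, IsBasePoint q B u₀ v₀ c g e := by
  obtain ⟨u, hu⟩ := DFunLike.ne_iff.1 hq
  obtain ⟨v₀, huv⟩ := DFunLike.ne_iff.1 hu
  obtain ⟨u₀, h₀⟩ : ∃ u₀, q u₀ v₀ = 1 := ⟨(q u v₀)⁻¹ • u, by simp [inv_mul_cancel₀ huv]⟩
  obtain ⟨g, w, hgw⟩ := rank_le_one_iff_exists_eq_smulRight.1 (hB.rank_le_one u₀ v₀)
  obtain ⟨c, hc, htr⟩ := hB.trace_mul u₀ v₀ (by simp [h₀])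
  have hc_eq : g w * g w = c := by simpa [hgw, h₀] using htr g w hgw u₀ v₀
  have hgw₀ : g w ≠ 0 := fun h => hc (by simp [← hc_eq, h])
  refine ⟨u₀, v₀, g w, g, (g w)⁻¹ • w, h₀, hgw₀, by simp [hgw₀], fun z => ?_, fun u' v' => ?_⟩
  · rw [hgw, smulRight_apply, smul_smul]
    congr 1
    field_simp
  · rw [map_smul, map_smul, htr g w hgw u' v', ← hc_eq, smul_eq_mul]
    field_simp

end TraceRealizes

namespace IsBasePoint

variable {u₀ : U} {v₀ : V} {c : 𝕜} {g : F →L[𝕜] 𝕜} {e : F}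

theorem flip (h : IsBasePoint q B u₀ v₀ c g e) : IsBasePoint q.flip B.flip v₀ u₀ c g e where
  pairing := h.pairing
  ne_zero := h.ne_zero
  dual_apply := h.dual_apply
  apply_base := h.apply_base
  trace_apply u v := by simpa [mul_comm] using h.trace_apply v u

theorem forall_dual_comp_eq_zero_or_forall_apply_eq_zero (h : IsBasePoint q B u₀ v₀ c g e)
    (hB : TraceRealizes q B) :
    (∀ x, q x v₀ = 0 → ∀ z, g (B x v₀ z) = 0) ∨ ∀ x, q x v₀ = 0 → B x v₀ e = 0 := by
  let L : (q.flip v₀).ker →ₗ[𝕜] F →L[𝕜] F := (B.flip v₀).domRestrict _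
  have hL := eq_zero_or_eq_zero_of_forall_apply
    (f := (compL 𝕜 F F 𝕜 g).toLinearMap ∘ₗ L)
    (g := (ContinuousLinearMap.apply 𝕜 F e).toLinearMap ∘ₗ L) fun x => by
      by_contra! hne
      obtain ⟨z, hz⟩ := DFunLike.ne_iff.1 hne.1
      have hx : q x v₀ = 0 := x.2
      have hminor := minors_of_rank_le_one (hB.rank_le_one x v₀) g z e
      rw [h.trace_apply, hx, mul_zero, mul_zero, zero_smul] at hminor
      exact smul_ne_zero hz hne.2 hminor
  refine hL.imp (fun h₁ x hx z => ?_) (fun h₂ x hx => ?_)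
  · exact DFunLike.congr_fun (LinearMap.congr_fun h₁ ⟨x, hx⟩) z
  · exact LinearMap.congr_fun h₂ ⟨x, hx⟩

theorem apply_eq_add (h : IsBasePoint q B u₀ v₀ c g e) (hB : TraceRealizes q B) {x : U}
    (hx : q x v₀ = 0) (z : F) : B x v₀ z = g z • B x v₀ e + g (B x v₀ z) • e := by
  have hgx : g (B x v₀ e) = 0 := by simp [h.trace_apply, hx]
  have hminor_x := minors_of_rank_le_one (hB.rank_le_one x v₀) g z e
  have hminor := minors_of_rank_le_one (hB.rank_le_one (u₀ + x) v₀) g e z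
  simp only [map_add, LinearMap.add_apply, add_apply, h.apply_base, map_smul, h.dual_apply, hgx,
    smul_eq_mul] at hminor hminor_x
  rw [zero_smul] at hminor_x
  refine smul_right_injective F h.ne_zero ?_
  dsimp only
  linear_combination (norm := module) hminor + hminor_x

theorem pairing_eq_zero_of_eq_smulRight (h : IsBasePoint q B u₀ v₀ c g e) (hB : TraceRealizes q B)
    {x : U} {y : V} (hy : q u₀ y = 0) {k : F →L[𝕜] 𝕜} {w : F} (hkw : B u₀ (v₀ + y) = k.smulRight w)
    (hx : q x v₀ = 0) (hkx : k (B x v₀ w) = 0) : q x y = 0 := by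
  obtain ⟨d, hd, htr⟩ := hB.trace_mul u₀ (v₀ + y) (by simp [h.pairing, hy])
  simpa [hkx, hx, h.pairing, hd] using htr k w hkw x v₀

theorem pairing_eq_zero_of_dual_comp_eq_zero (h : IsBasePoint q B u₀ v₀ c g e)
    (hB : TraceRealizes q B) {x : U} {y : V} (hx : q x v₀ = 0) (hy : q u₀ y = 0)
    (hgx : ∀ z, g (B x v₀ z) = 0) (hgy : ∀ z, g (B u₀ y z) = 0) : q x y = 0 := by
  have hBy (w : F) : B u₀ y w = g w • B u₀ y e := by
    have := h.flip.apply_eq_add hB.flip hy w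
    rwa [LinearMap.flip_apply, hgy, zero_smul, add_zero] at this
  refine h.pairing_eq_zero_of_eq_smulRight hB hy (k := g) (w := c • e + B u₀ y e) ?_ hx (hgx _)
  ext w
  simp [h.apply_base, hBy w, smul_smul, mul_comm]

theorem pairing_eq_zero_of_apply_eq_zero (h : IsBasePoint q B u₀ v₀ c g e)
    (hB : TraceRealizes q B) {x : U} {y : V} (hx : q x v₀ = 0) (hy : q u₀ y = 0)
    (hxe : B x v₀ e = 0) (hye : B u₀ y e = 0) : q x y = 0 := by
  have hBy (w : F) : B u₀ y w = g (B u₀ y w) • e := by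
    have := h.flip.apply_eq_add hB.flip hy w
    rwa [LinearMap.flip_apply, hye, smul_zero, zero_add] at this
  refine h.pairing_eq_zero_of_eq_smulRight hB hy (k := c • g + g ∘L B u₀ y) (w := e) ?_ hx
    (by simp [hxe])
  ext w
  rw [map_add, add_apply, h.apply_base, hBy w]
  simp [add_smul]

theorem eq_zero_of_forall_pairing_eq_zero (h : IsBasePoint q B u₀ v₀ c g e)
    (hq : q.SeparatingLeft) {x : U} (hx : q x v₀ = 0) (hxy : ∀ y, q u₀ y = 0 → q x y = 0) :
    x = 0 :=
  hq x fun v => by simpa [hx] using hxy (v - q u₀ v • v₀) (by simp [h.pairing])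

variable [SeparatingDual 𝕜 F]

theorem apply_eq_zero_of_pairing_eq_zero (h : IsBasePoint q B u₀ v₀ c g e) (hB : TraceRealizes q B)
    (hq : q.Nondegenerate) (x : U) {y : V} (hy : q u₀ y = 0) (hye : B u₀ y e = 0) :
    B x y e = 0 := by
  have hu₀ : u₀ ≠ 0 := by rintro rfl; simpa using h.pairing
  rcases eq_or_ne y 0 with rfl | hy₀
  · simp
  have hBy (w : F) : B u₀ y w = g (B u₀ y w) • e := by
    simpa [hye] using h.flip.apply_eq_add hB.flip hy w
  have hgX : g (B x y e) = 0 := by simp [h.trace_apply, hy]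
  obtain ⟨w, hw⟩ : ∃ w, B u₀ y w ≠ 0 :=
    DFunLike.ne_iff.1 fun h₀ => (hB.eq_zero_or_eq_zero hq h₀).elim hu₀ hy₀
  have hX := minors_of_rank_le_one (hB.rank_le_one x y) g e w
  have hminor := minors_of_rank_le_one (hB.rank_le_one (u₀ + x) y) g e w
  simp only [map_add, LinearMap.add_apply, add_apply, hye, hgX, map_zero] at hX hminor
  have : g (B u₀ y w) • B x y e = 0 := by
    linear_combination (norm := module) hX - hminor
  rw [hBy] at hw
  exact (smul_eq_zero.1 this).resolve_left (left_ne_zero_of_smul hw)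

theorem smul_apply_eq_of_pairing_eq_zero (h : IsBasePoint q B u₀ v₀ c g e) (hB : TraceRealizes q B)
    (hq : q.Nondegenerate) (hP : ∀ x, q x v₀ = 0 → ∀ z, g (B x v₀ z) = 0)
    (hQ : ∀ y, q u₀ y = 0 → B u₀ y e = 0) {x : U} {y : V} (hx : q x v₀ = 0) (hy : q u₀ y = 0)
    (z : F) : c • B x y z = g (B u₀ y z) • B x v₀ e := by
  have hv₀ : v₀ ≠ 0 := by rintro rfl; simpa using h.pairing
  rcases eq_or_ne x 0 with rfl | hx₀
  · simp
  have hBx (w : F) : B x v₀ w = g w • B x v₀ e := by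
    simpa [hP x hx] using h.apply_eq_add hB hx w
  have hBy (w : F) : B u₀ y w = g (B u₀ y w) • e := by
    simpa [hQ y hy] using h.flip.apply_eq_add hB.flip hy w
  have hgx : g (B x v₀ e) = 0 := hP x hx e
  have hXe := h.apply_eq_zero_of_pairing_eq_zero hB hq x hy (hQ y hy)
  have hgX (w : F) : g (B x y w) = 0 := by
    have hne : B x v₀ e ≠ 0 := fun h₀ =>
      (hB.eq_zero_or_eq_zero hq (ext fun w => by simp [hBx w, h₀])).elim hx₀ hv₀
    have hminor := minors_of_rank_le_one (hB.rank_le_one x (v₀ + y)) g e w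
    simp only [map_add, add_apply, hXe, hgx, hP x hx w, zero_add, add_zero,
      zero_smul] at hminor
    exact (smul_eq_zero.1 hminor.symm).resolve_right hne
  have hminor := minors_of_rank_le_one (hB.rank_le_one (u₀ + x) (v₀ + y)) g e z
  simp only [map_add, LinearMap.add_apply, add_apply, hXe, hgX, hgx, hQ y hy, h.apply_base,
    h.dual_apply, map_smul, smul_eq_mul, hBx z, map_zero] at hminor ⊢
  linear_combination (norm := module) hminor - c • hBy z

theorem smul_apply_eq (h : IsBasePoint q B u₀ v₀ c g e) (hB : TraceRealizes q B)
    (hq : q.Nondegenerate) (hP : ∀ x, q x v₀ = 0 → ∀ z, g (B x v₀ z) = 0)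
    (hQ : ∀ y, q u₀ y = 0 → B u₀ y e = 0) (u : U) (v : V) (z : F) :
    c • B u v z = g (B u₀ v z) • B u v₀ e := by
  obtain ⟨x, a, hx, rfl⟩ : ∃ x a, q x v₀ = 0 ∧ u = x + a • u₀ :=
    ⟨u - q u v₀ • u₀, q u v₀, by simp [h.pairing], by abel⟩
  obtain ⟨y, b, hy, rfl⟩ : ∃ y b, q u₀ y = 0 ∧ v = y + b • v₀ :=
    ⟨v - q u₀ v • v₀, q u₀ v, by simp [h.pairing], by abel⟩
  have hxy := h.smul_apply_eq_of_pairing_eq_zero hB hq hP hQ hx hy z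
  have hBx : B x v₀ z = g z • B x v₀ e := by simpa [hP x hx] using h.apply_eq_add hB hx z
  have hBy : B u₀ y z = g (B u₀ y z) • e := by
    simpa [hQ y hy] using h.flip.apply_eq_add hB.flip hy z
  simp only [map_add, map_smul, LinearMap.add_apply, LinearMap.smul_apply, add_apply, smul_apply,
    h.apply_base, h.dual_apply, smul_eq_mul]
  linear_combination (norm := module) hxy + (c * b) • hBx + (c * a) • hBy

theorem exists_eq_smulRight (h : IsBasePoint q B u₀ v₀ c g e) (hB : TraceRealizes q B)
    (hq : q.Nondegenerate) (hP : ∀ x, q x v₀ = 0 → ∀ z, g (B x v₀ z) = 0)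
    (hQ : ∀ y, q u₀ y = 0 → B u₀ y e = 0) :
    ∃ (S : U →ₗ[𝕜] F) (C : V →ₗ[𝕜] F →L[𝕜] 𝕜), ∀ u v, B u v = (C v).smulRight (S u) := by
  refine ⟨(ContinuousLinearMap.apply 𝕜 F e).toLinearMap ∘ₗ B.flip v₀,
    c⁻¹ • (compL 𝕜 F F 𝕜 g).toLinearMap ∘ₗ B u₀, fun u v => ?_⟩
  ext z
  refine smul_right_injective F h.ne_zero ?_
  simpa [smul_smul, h.ne_zero] using h.smul_apply_eq hB hq hP hQ u v z

end IsBasePoint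

theorem TraceRealizes.exists_eq_smulRight [SeparatingDual 𝕜 F] (hB : TraceRealizes q B)
    (hq : q.Nondegenerate) :
    (∃ (S : U →ₗ[𝕜] F) (C : V →ₗ[𝕜] F →L[𝕜] 𝕜), ∀ u v, B u v = (C v).smulRight (S u)) ∨
      ∃ (S : V →ₗ[𝕜] F) (C : U →ₗ[𝕜] F →L[𝕜] 𝕜), ∀ u v, B u v = (C u).smulRight (S v) := by
  rcases eq_or_ne q 0 with rfl | hq₀
  · exact .inl ⟨0, 0, fun u v => by simp [hq.1 u fun _ => rfl]⟩
  obtain ⟨u₀, v₀, c, g, e, h⟩ := hB.exists_isBasePoint hq₀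
  have hq' := LinearMap.flip_nondegenerate.2 hq
  rcases h.forall_dual_comp_eq_zero_or_forall_apply_eq_zero hB with hP | hP <;>
    rcases h.flip.forall_dual_comp_eq_zero_or_forall_apply_eq_zero hB.flip with hQ | hQ
  · obtain ⟨S, C, hSC⟩ := h.flip.exists_eq_smulRight hB.flip hq' hQ fun x hx => by
      rw [h.eq_zero_of_forall_pairing_eq_zero hq.1 hx fun y hy =>
        h.pairing_eq_zero_of_dual_comp_eq_zero hB hx hy (hP x hx) (hQ y hy)]
      simp
    exact .inr ⟨S, C, fun u v => hSC v u⟩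
  · exact .inl (h.exists_eq_smulRight hB hq hP hQ)
  · obtain ⟨S, C, hSC⟩ := h.flip.exists_eq_smulRight hB.flip hq' hQ hP
    exact .inr ⟨S, C, fun u v => hSC v u⟩
  · refine .inl (h.exists_eq_smulRight hB hq (fun x hx => ?_) hQ)
    rw [h.eq_zero_of_forall_pairing_eq_zero hq.1 hx fun y hy =>
      h.pairing_eq_zero_of_apply_eq_zero hB hx hy (hP x hx) (hQ y hy)]
    simp

end TraceRealization

section TraceAdjoint

variable {𝕜 E F X : Type*} [NontriviallyNormedField 𝕜] [NormedAddCommGroup E] [NormedSpace 𝕜 E]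
  [NormedAddCommGroup F] [NormedSpace 𝕜 F] {ι : X → E →L[𝕜] E} {Φ : X → F →L[𝕜] F}

theorem ext_of_forall_dual_apply [SeparatingDual 𝕜 F] {T T' : F →L[𝕜] F}
    (h : ∀ (g : F →L[𝕜] 𝕜) w, g (T w) = g (T' w)) : T = T' :=
  ext fun w => by
    by_contra hw
    obtain ⟨g, hg⟩ := SeparatingDual.exists_ne_zero (R := 𝕜) (sub_ne_zero.2 hw)
    exact hg (by simp [h])

theorem separatingDual_pairing_nondegenerate [SeparatingDual 𝕜 E] :
    (topDualPairing 𝕜 E).flip.Nondegenerate where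
  left u hu := by
    by_contra hne
    obtain ⟨f, hf⟩ := SeparatingDual.exists_ne_zero (R := 𝕜) hne
    exact hf (hu f)
  right f hf := ext hf

/-- `B` is the adjoint for the trace of `Φ` with respect to `ι`, restricted to rank-one operators:
`tr (B u f * Φ a) = tr ((f.smulRight u) * ι a)` whenever `Φ a` has rank at most one. -/
def IsTraceAdjoint (ι : X → E →L[𝕜] E) (Φ : X → F →L[𝕜] F)
    (B : E →ₗ[𝕜] (E →L[𝕜] 𝕜) →ₗ[𝕜] F →L[𝕜] F) : Prop :=
  ∀ u f a (h : F →L[𝕜] 𝕜) w, Φ a = h.smulRight w → h (B u f w) = f (ι a u)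

variable {N : ℕ}

theorem PreservesPowTrace.exists_isTraceAdjoint [SeparatingDual 𝕜 F]
    (hP : PreservesPowTrace N ι Φ)
    (hι : ∀ (f : E →L[𝕜] 𝕜) u, ∃ r, ι r = f.smulRight u)
    (hΦ : ∀ (h : F →L[𝕜] 𝕜) w, ∃ a, Φ a = h.smulRight w) : ∃ B, IsTraceAdjoint ι Φ B := by
  rcases eq_or_ne (topDualPairing 𝕜 E).flip 0 with hq | hq
  · refine ⟨0, fun u f a h w _ => ?_⟩
    have := LinearMap.congr_fun₂ hq (ι a u) f
    simpa using this.symm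
  let J : (F →L[𝕜] F) →ₗ[𝕜] ({p : X × (F →L[𝕜] 𝕜) × F // Φ p.1 = p.2.1.smulRight p.2.2} → 𝕜) :=
    LinearMap.pi fun p => (p.1.2.1 ∘L ContinuousLinearMap.apply 𝕜 F p.1.2.2).toLinearMap
  have hJ : Function.Injective J := fun T T' hT => ext_of_forall_dual_apply fun h w => by
    obtain ⟨a, ha⟩ := hΦ h w
    exact congrFun hT ⟨(a, h, w), ha⟩
  obtain ⟨B, hB⟩ := exists_bilinear_lift hq hJ
    (b := LinearMap.mk₂ 𝕜 (fun u f p => f (ι p.1.1 u)) (by intros; ext; simp) (by intros; ext; simp)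
      (by intros; ext; simp) (by intros; ext; simp)) fun u f hfu => by
    obtain ⟨r, hr⟩ := hι f u
    obtain ⟨c, h, w, -, -, -, hw⟩ := hP.exists_smulRight_eq_smul hr hfu
    refine ⟨h.smulRight w, funext fun p => ?_⟩
    simpa [J, p.2, mul_comm] using hw p.1.1
  exact ⟨B, fun u f a h w hhw => congrFun (hB u f) ⟨(a, h, w), hhw⟩⟩

namespace IsTraceAdjoint

variable {B : E →ₗ[𝕜] (E →L[𝕜] 𝕜) →ₗ[𝕜] F →L[𝕜] F}

theorem eq_smulRight [SeparatingDual 𝕜 F] (hB : IsTraceAdjoint ι Φ B)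
    (hΦ : ∀ (h : F →L[𝕜] 𝕜) w, ∃ a, Φ a = h.smulRight w) {u : E} {f : E →L[𝕜] 𝕜}
    {h : F →L[𝕜] 𝕜} {w : F} (hw : ∀ a, h (Φ a w) = f (ι a u)) : B u f = h.smulRight w :=
  ext_of_forall_dual_apply fun k z => by
    obtain ⟨a, ha⟩ := hΦ k z
    rw [hB u f a k z ha, ← hw a, ha]
    simp [mul_comm]

theorem exists_eq_smulRight [SeparatingDual 𝕜 F] (hB : IsTraceAdjoint ι Φ B)
    (hP : PreservesPowTrace N ι Φ) (hι : ∀ (f : E →L[𝕜] 𝕜) u, ∃ r, ι r = f.smulRight u)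
    (hΦ : ∀ (h : F →L[𝕜] 𝕜) w, ∃ a, Φ a = h.smulRight w) {u : E} {f : E →L[𝕜] 𝕜}
    (hfu : f u ≠ 0) :
    ∃ (h : F →L[𝕜] 𝕜) (w : F), B u f = h.smulRight w ∧ h w ^ (N + 2) = f u ^ (N + 2) ∧
      (∀ a, h (Φ a w) = f (ι a u)) ∧
      ∃ c : 𝕜, c ≠ 0 ∧ ∀ u' f', h (B u' f' w) = c * (f' u * f u') := by
  obtain ⟨r, hr⟩ := hι f u
  obtain ⟨c, h, w, hc, hcr, hpow, hw⟩ := hP.exists_smulRight_eq_smul hr hfu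
  refine ⟨h, w, hB.eq_smulRight hΦ hw, hpow, hw, c, hc, fun u' f' => ?_⟩
  have hr' : Φ r = (c⁻¹ • h).smulRight w := by
    rw [← inv_smul_smul₀ hc (Φ r), ← hcr]
    ext
    simp [smul_smul]
  have := hB u' f' r _ _ hr'
  rw [hr] at this
  rw [← inv_mul_eq_iff_eq_mul₀ hc]
  simpa [mul_comm] using this

theorem rank_le_one [SeparatingDual 𝕜 E] [SeparatingDual 𝕜 F]
    (hB : IsTraceAdjoint ι Φ B) (hP : PreservesPowTrace N ι Φ)
    (hι : ∀ (f : E →L[𝕜] 𝕜) u, ∃ r, ι r = f.smulRight u)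
    (hΦ : ∀ (h : F →L[𝕜] 𝕜) w, ∃ a, Φ a = h.smulRight w) (u : E) (f : E →L[𝕜] 𝕜) :
    (B u f : F →ₗ[𝕜] F).rank ≤ 1 := by
  have rank_le {f : E →L[𝕜] 𝕜} (hfu : f u ≠ 0) : (B u f : F →ₗ[𝕜] F).rank ≤ 1 := by
    obtain ⟨h, w, hhw, -⟩ := hB.exists_eq_smulRight hP hι hΦ hfu
    rw [hhw]
    exact rank_smulRight_le h w
  by_cases hfu : f u = 0
  swap
  · exact rank_le hfu
  rcases eq_or_ne u 0 with rfl | hu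
  · exact rank_le_one_iff_minors.2 (by simp)
  obtain ⟨g, hg⟩ := SeparatingDual.exists_eq_one (R := 𝕜) hu
  have hcont : Continuous fun z : 𝕜 => B u f + z • B u g := by fun_prop
  have hmem : ∀ᶠ z in nhdsWithin (0 : 𝕜) {0}ᶜ,
      B u f + z • B u g ∈ {T : F →L[𝕜] F | (T : F →ₗ[𝕜] F).rank ≤ 1} := by
    filter_upwards [self_mem_nhdsWithin] with z hz
    rw [← map_smul, ← map_add]
    exact rank_le (by simpa [hfu, hg] using hz)
  have := isClosed_setOf_rank_le_one.mem_of_tendsto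
    ((hcont.tendsto 0).mono_left nhdsWithin_le_nhds) hmem
  simpa using this

theorem traceRealizes [SeparatingDual 𝕜 E] [SeparatingDual 𝕜 F] (hB : IsTraceAdjoint ι Φ B)
    (hP : PreservesPowTrace N ι Φ) (hι : ∀ (f : E →L[𝕜] 𝕜) u, ∃ r, ι r = f.smulRight u)
    (hΦ : ∀ (h : F →L[𝕜] 𝕜) w, ∃ a, Φ a = h.smulRight w) :
    TraceRealizes (topDualPairing 𝕜 E).flip B where
  rank_le_one := hB.rank_le_one hP hι hΦ
  trace_mul u f (hfu : f u ≠ 0) := by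
    obtain ⟨h, w, hhw, -, -, c, hc, htr⟩ := hB.exists_eq_smulRight hP hι hΦ hfu
    refine ⟨c, hc, fun h' w' hhw' u' f' => ?_⟩
    rw [← apply_eq_apply_of_smulRight_eq (hhw.symm.trans hhw')]
    exact htr u' f'

theorem exists_pow_eq_one_forall_eq_mul [SeparatingDual 𝕜 E] [SeparatingDual 𝕜 F]
    (hB : IsTraceAdjoint ι Φ B) (hP : PreservesPowTrace N ι Φ)
    (hι : ∀ (f : E →L[𝕜] 𝕜) u, ∃ r, ι r = f.smulRight u)
    (hΦ : ∀ (h : F →L[𝕜] 𝕜) w, ∃ a, Φ a = h.smulRight w) {l : E →ₗ[𝕜] (E →L[𝕜] 𝕜) →ₗ[𝕜] 𝕜}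
    (hl : ∀ u f (h : F →L[𝕜] 𝕜) w, B u f = h.smulRight w → l u f = h w) :
    ∃ ξ : 𝕜, ξ ^ (N + 2) = 1 ∧ ∀ u f, f u = ξ * l u f := by
  have hpow {u : E} {f : E →L[𝕜] 𝕜} (hfu : f u ≠ 0) : l u f ^ (N + 2) = f u ^ (N + 2) := by
    obtain ⟨h, w, hhw, hpow, -⟩ := hB.exists_eq_smulRight hP hι hΦ hfu
    rw [hl u f h w hhw, hpow]
  rcases subsingleton_or_nontrivial E with hE | hE
  · exact ⟨1, one_pow _, fun u f => by simp [Subsingleton.elim u 0]⟩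
  obtain ⟨ξ, hξ⟩ := bilinear_eq_smul_of_eq_zero_imp (q := (topDualPairing 𝕜 E).flip) (l := l)
    fun u f hlu => by
      by_contra hfu
      exact pow_ne_zero (N + 2) hfu ((hpow hfu).symm.trans (by simp [hlu]))
  have hξ (u : E) (f : E →L[𝕜] 𝕜) : f u = ξ * l u f := LinearMap.congr_fun₂ hξ u f
  refine ⟨ξ, ?_, hξ⟩
  obtain ⟨u, hu⟩ := exists_ne (0 : E)
  obtain ⟨f, hf⟩ := SeparatingDual.exists_ne_zero (R := 𝕜) hu
  have := hpow hf
  rw [hξ u f, mul_pow, eq_comm] at this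
  refine (mul_eq_right₀ (pow_ne_zero _ ?_)).1 this
  exact right_ne_zero_of_mul (hξ u f ▸ hf)

theorem eq_dual_apply [SeparatingDual 𝕜 E] [SeparatingDual 𝕜 F]
    (hB : IsTraceAdjoint ι Φ B) (hP : PreservesPowTrace N ι Φ)
    (hι : ∀ (f : E →L[𝕜] 𝕜) u, ∃ r, ι r = f.smulRight u)
    (hΦ : ∀ (h : F →L[𝕜] 𝕜) w, ∃ a, Φ a = h.smulRight w) {a : X}
    {τ : E →ₗ[𝕜] (E →L[𝕜] 𝕜) →ₗ[𝕜] 𝕜}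
    (hτ : ∀ u f (h : F →L[𝕜] 𝕜) w, B u f = h.smulRight w → τ u f = h (Φ a w)) (u : E)
    (f : E →L[𝕜] 𝕜) : τ u f = f (ι a u) := by
  rcases eq_or_ne u 0 with rfl | hu
  · simp
  obtain ⟨g, hg⟩ := SeparatingDual.exists_ne_zero (R := 𝕜) hu
  have hq : (topDualPairing 𝕜 E).flip ≠ 0 := fun h => hg (LinearMap.congr_fun₂ h u g)
  have : τ = (topDualPairing 𝕜 E).flip ∘ₗ (ι a).toLinearMap :=
    bilinear_ext_of_ne_zero hq fun u f hfu => by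
      obtain ⟨h, w, hhw, -, hw, -⟩ := hB.exists_eq_smulRight hP hι hΦ hfu
      exact (hτ u f h w hhw).trans (hw a)
  exact LinearMap.congr_fun₂ this u f

end IsTraceAdjoint

end TraceAdjoint

section Intertwining

variable {𝕜 F U X : Type*} [NontriviallyNormedField 𝕜] [NormedAddCommGroup F] [NormedSpace 𝕜 F]
  [SeparatingDual 𝕜 F] [NormedAddCommGroup U] [NormedSpace 𝕜 U] {Φ : X → F →L[𝕜] F}
  {D : X → U →L[𝕜] U}

theorem surjective_of_intertwining (hΦ : ∀ (h : F →L[𝕜] 𝕜) w, ∃ a, Φ a = h.smulRight w)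
    (hD : Function.Injective D) {S : U →ₗ[𝕜] F} (hS : Function.Injective S)
    (hDS : ∀ a x, Φ a (S x) = S (D a x)) : Function.Surjective S := by
  intro w
  rcases eq_or_ne w 0 with rfl | hw
  · exact ⟨0, map_zero S⟩
  obtain ⟨h, hhw⟩ := SeparatingDual.exists_ne_zero (R := 𝕜) hw
  obtain ⟨a, ha⟩ := hΦ h w
  obtain ⟨b, hb⟩ := hΦ 0 0
  have hab : D a ≠ D b := hD.ne fun hab => hw <| by
    have := DFunLike.congr_fun (ha.symm.trans (hab ▸ hb)) w
    simpa [hhw] using this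
  obtain ⟨x, hx⟩ := DFunLike.ne_iff.1 hab
  have hSx : h (S x) • w = S (D a x) := by rw [← hDS, ha, smulRight_apply]
  have hhx : h (S x) ≠ 0 := fun h₀ => hx <| hS <| by
    rw [← hSx, ← hDS, hb, h₀]
    simp
  exact ⟨(h (S x))⁻¹ • D a x, by rw [map_smul, ← hSx, inv_smul_smul₀ hhx]⟩

variable [CompleteSpace F] [CompleteSpace U]

theorem continuous_of_intertwining (hΦ : ∀ (h : F →L[𝕜] 𝕜) w, ∃ a, Φ a = h.smulRight w)
    {S : U ≃ₗ[𝕜] F} (hDS : ∀ a x, Φ a (S x) = S (D a x)) : Continuous S := by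
  rcases subsingleton_or_nontrivial F with hF | hF
  · exact continuous_of_const fun _ _ => Subsingleton.elim _ _
  obtain ⟨w, hw⟩ := exists_ne (0 : F)
  have hSw : S.symm w ≠ 0 := S.symm.map_ne_zero_iff.2 hw
  refine S.toLinearMap.continuous_of_seq_closed_graph fun x x₀ y hx hy => ?_
  by_contra hne
  obtain ⟨h, hh⟩ := SeparatingDual.exists_ne_zero (R := 𝕜) (sub_ne_zero.2 hne)
  obtain ⟨a, ha⟩ := hΦ h w
  have hDa (x : U) : D a x = h (S x) • S.symm w := S.injective <| by simp [← hDS, ha]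
  have hlim : Filter.Tendsto (fun n => h (S (x n)) • S.symm w) Filter.atTop
      (nhds (h y • S.symm w)) := ((h.continuous.tendsto y).comp hy).smul_const _
  have hlim' : Filter.Tendsto (fun n => h (S (x n)) • S.symm w) Filter.atTop
      (nhds (h (S x₀) • S.symm w)) := by
    simpa only [Function.comp_def, hDa] using ((D a).continuous.tendsto x₀).comp hx
  refine hh ?_
  rw [map_sub, sub_eq_zero]
  exact smul_left_injective 𝕜 hSw (tendsto_nhds_unique hlim hlim')

theorem exists_continuousLinearEquiv_of_intertwining
    (hΦ : ∀ (h : F →L[𝕜] 𝕜) w, ∃ a, Φ a = h.smulRight w) (hD : Function.Injective D)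
    {S : U →ₗ[𝕜] F} (hS : Function.Injective S) (hDS : ∀ a x, Φ a (S x) = S (D a x)) :
    ∃ S' : U ≃L[𝕜] F, ∀ a, Φ a = (S' : U →L[𝕜] F) ∘L D a ∘L (S'.symm : F →L[𝕜] U) := by
  let S' := LinearEquiv.ofBijective S ⟨hS, surjective_of_intertwining hΦ hD hS hDS⟩
  refine ⟨S'.toContinuousLinearEquivOfContinuous (continuous_of_intertwining hΦ hDS),
    fun a => ext fun w => ?_⟩
  obtain ⟨x, rfl⟩ := S'.surjective w
  rw [comp_apply, comp_apply]
  exact (hDS a x).trans (congrArg (fun z => S (D a z)) (S'.symm_apply_apply x).symm)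

theorem exists_continuousLinearEquiv_of_separating {V : Type*}
    (hΦ : ∀ (h : F →L[𝕜] 𝕜) w, ∃ a, Φ a = h.smulRight w) (hD : Function.Injective D)
    {S : U →ₗ[𝕜] F} {C : V → F →L[𝕜] 𝕜} (hCS : ∀ x, (∀ v, C v (S x) = 0) → x = 0)
    (hDS : ∀ a v x, C v (Φ a (S x)) = C v (S (D a x))) :
    ∃ S' : U ≃L[𝕜] F, ∀ a, Φ a = (S' : U →L[𝕜] F) ∘L D a ∘L (S'.symm : F →L[𝕜] U) := by
  have hS : Function.Injective S := (injective_iff_map_eq_zero S).2 fun x hx =>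
    hCS x fun v => by rw [hx, map_zero]
  have hC (w : F) (hw : ∀ v, C v w = 0) : w = 0 := by
    by_contra hne
    obtain ⟨h, hhw⟩ := SeparatingDual.exists_ne_zero (R := 𝕜) hne
    obtain ⟨a, ha⟩ := hΦ h w
    obtain ⟨b, hb⟩ := hΦ 0 0
    have hDa : D a = 0 := ext fun x => hCS _ fun v => by simp [← hDS, ha, hw]
    have hDb : D b = 0 := ext fun x => hCS _ fun v => by simp [← hDS, hb]
    have := DFunLike.congr_fun (ha.symm.trans ((hD (hDa.trans hDb.symm)) ▸ hb)) w
    simp [hhw, hne] at this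
  refine exists_continuousLinearEquiv_of_intertwining hΦ hD hS fun a x => ?_
  exact sub_eq_zero.1 (hC _ fun v => by rw [map_sub, hDS, sub_self])

end Intertwining

section Representation

variable {𝕜 E F X : Type*} [NontriviallyNormedField 𝕜] [NormedAddCommGroup E] [NormedSpace 𝕜 E]
  [SeparatingDual 𝕜 E] [NormedAddCommGroup F] [NormedSpace 𝕜 F] [SeparatingDual 𝕜 F]
  [CompleteSpace F] {ι : X → E →L[𝕜] E} {Φ : X → F →L[𝕜] F}
  {B : E →ₗ[𝕜] (E →L[𝕜] 𝕜) →ₗ[𝕜] F →L[𝕜] F} {N : ℕ}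

theorem compL_flip_injective {𝕜 E : Type*} [NontriviallyNormedField 𝕜] [NormedAddCommGroup E]
    [NormedSpace 𝕜 E] [SeparatingDual 𝕜 E] : Function.Injective (compL 𝕜 E E 𝕜).flip :=
  fun _ _ h => ext_of_forall_dual_apply fun g w => DFunLike.congr_fun (DFunLike.congr_fun h g) w

theorem IsTraceAdjoint.exists_continuousLinearEquiv [CompleteSpace E] (hB : IsTraceAdjoint ι Φ B)
    (hP : PreservesPowTrace N ι Φ) (hι : ∀ (f : E →L[𝕜] 𝕜) u, ∃ r, ι r = f.smulRight u)
    (hΦ : ∀ (h : F →L[𝕜] 𝕜) w, ∃ a, Φ a = h.smulRight w) (hinj : Function.Injective ι)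
    {S : E →ₗ[𝕜] F} {C : (E →L[𝕜] 𝕜) →ₗ[𝕜] F →L[𝕜] 𝕜}
    (hSC : ∀ u f, B u f = (C f).smulRight (S u)) :
    ∃ ξ : 𝕜, ξ ^ (N + 2) = 1 ∧ ∃ S : E ≃L[𝕜] F, ∀ a,
      Φ a = ξ • ((S : E →L[𝕜] F) ∘L ι a ∘L (S.symm : F →L[𝕜] E)) := by
  obtain ⟨ξ, hξ, hC⟩ := hB.exists_pow_eq_one_forall_eq_mul hP hι hΦ
    (l := (topDualPairing 𝕜 F).flip.compl₁₂ S C) fun u f h w hhw =>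
      apply_eq_apply_of_smulRight_eq ((hSC u f).symm.trans hhw) (.id 𝕜 F)
  have hΦC (a : X) (u : E) (f : E →L[𝕜] 𝕜) : C f (Φ a (S u)) = f (ι a u) :=
    hB.eq_dual_apply hP hι hΦ (a := a)
      (τ := (topDualPairing 𝕜 F).flip.compl₁₂ ((Φ a).toLinearMap ∘ₗ S) C)
      (fun u f h w hhw => apply_eq_apply_of_smulRight_eq ((hSC u f).symm.trans hhw) (Φ a)) u f
  have hξ₀ : ξ ≠ 0 := (IsUnit.of_pow_eq_one hξ (N + 1).succ_ne_zero).ne_zero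
  obtain ⟨S', hS'⟩ := exists_continuousLinearEquiv_of_separating hΦ (D := fun a => ξ • ι a)
    ((smul_right_injective _ hξ₀).comp hinj) (S := S) (C := C)
    (fun u hu => separatingDual_pairing_nondegenerate.1 u fun f => by simpa [hu f] using hC u f)
    fun a f u => by simpa [hΦC] using hC (ι a u) f
  exact ⟨ξ, hξ, S', fun a => by simp [hS' a]⟩

theorem IsTraceAdjoint.exists_dual_continuousLinearEquiv [CompleteSpace 𝕜]
    (hB : IsTraceAdjoint ι Φ B) (hP : PreservesPowTrace N ι Φ)
    (hι : ∀ (f : E →L[𝕜] 𝕜) u, ∃ r, ι r = f.smulRight u)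
    (hΦ : ∀ (h : F →L[𝕜] 𝕜) w, ∃ a, Φ a = h.smulRight w) (hinj : Function.Injective ι)
    {S : (E →L[𝕜] 𝕜) →ₗ[𝕜] F} {C : E →ₗ[𝕜] F →L[𝕜] 𝕜}
    (hSC : ∀ u f, B u f = (C u).smulRight (S f)) :
    ∃ ξ : 𝕜, ξ ^ (N + 2) = 1 ∧ ∃ S : (E →L[𝕜] 𝕜) ≃L[𝕜] F, ∀ a,
      Φ a = ξ • ((S : (E →L[𝕜] 𝕜) →L[𝕜] F) ∘L (compL 𝕜 E E 𝕜).flip (ι a) ∘L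
        (S.symm : F →L[𝕜] E →L[𝕜] 𝕜)) := by
  obtain ⟨ξ, hξ, hC⟩ := hB.exists_pow_eq_one_forall_eq_mul hP hι hΦ
    (l := (topDualPairing 𝕜 F).compl₁₂ C S) fun u f h w hhw =>
      apply_eq_apply_of_smulRight_eq ((hSC u f).symm.trans hhw) (.id 𝕜 F)
  have hΦC (a : X) (u : E) (f : E →L[𝕜] 𝕜) : C u (Φ a (S f)) = f (ι a u) :=
    hB.eq_dual_apply hP hι hΦ (a := a)
      (τ := (topDualPairing 𝕜 F).compl₁₂ C ((Φ a).toLinearMap ∘ₗ S))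
      (fun u f h w hhw => apply_eq_apply_of_smulRight_eq ((hSC u f).symm.trans hhw) (Φ a)) u f
  have hξ₀ : ξ ≠ 0 := (IsUnit.of_pow_eq_one hξ (N + 1).succ_ne_zero).ne_zero
  obtain ⟨S', hS'⟩ := exists_continuousLinearEquiv_of_separating hΦ
    (D := fun a => ξ • (compL 𝕜 E E 𝕜).flip (ι a))
    ((smul_right_injective _ hξ₀).comp (compL_flip_injective.comp hinj)) (S := S) (C := C)
    (fun f hf => ext fun u => by simpa [hf u] using hC u f)
    fun a u f => by simpa [hΦC] using hC u (f ∘L ι a)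
  exact ⟨ξ, hξ, S', fun a => by simp [hS' a]⟩

theorem PreservesPowTrace.exists_continuousLinearEquiv [CompleteSpace 𝕜] [CompleteSpace E]
    (hP : PreservesPowTrace N ι Φ) (hι : ∀ (f : E →L[𝕜] 𝕜) u, ∃ r, ι r = f.smulRight u)
    (hΦ : ∀ (h : F →L[𝕜] 𝕜) w, ∃ a, Φ a = h.smulRight w) (hinj : Function.Injective ι) :
    ∃ ξ : 𝕜, ξ ^ (N + 2) = 1 ∧
      ((∃ S : E ≃L[𝕜] F, ∀ a, Φ a = ξ • ((S : E →L[𝕜] F) ∘L ι a ∘L (S.symm : F →L[𝕜] E))) ∨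
        ∃ S : (E →L[𝕜] 𝕜) ≃L[𝕜] F, ∀ a,
          Φ a = ξ • ((S : (E →L[𝕜] 𝕜) →L[𝕜] F) ∘L (compL 𝕜 E E 𝕜).flip (ι a) ∘L
            (S.symm : F →L[𝕜] E →L[𝕜] 𝕜))) := by
  obtain ⟨B, hB⟩ := hP.exists_isTraceAdjoint hι hΦ
  rcases (hB.traceRealizes hP hι hΦ).exists_eq_smulRight separatingDual_pairing_nondegenerate
    with ⟨S, C, hSC⟩ | ⟨S, C, hSC⟩
  · obtain ⟨ξ, hξ, hS⟩ := hB.exists_continuousLinearEquiv hP hι hΦ hinj hSC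
    exact ⟨ξ, hξ, .inl hS⟩
  · obtain ⟨ξ, hξ, hS⟩ := hB.exists_dual_continuousLinearEquiv hP hι hΦ hinj hSC
    exact ⟨ξ, hξ, .inr hS⟩

end Representation

theorem prod_ofFn_ite_eq {M : Type*} [Monoid M] (x y : M) {m : ℕ} (p : Fin m) :
    (List.ofFn fun j => if j = p then x else y).prod = y ^ (p : ℕ) * x * y ^ (m - 1 - p) := by
  have hset : (List.ofFn fun j => if j = p then x else y) = (List.replicate m y).set p x :=
    List.ext_getElem (by simp) fun n _ _ => by
      simp [List.getElem_set, Fin.ext_iff, eq_comm]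
  rw [hset, List.prod_set]
  simp only [List.take_replicate, List.drop_replicate, List.prod_replicate, List.length_replicate,
    p.isLt, if_true, min_eq_left p.isLt.le]
  congr 2
  omega

theorem exists_algEquiv_pow_mul_mul_pow {𝕜 A κ : Type*} [CommSemiring 𝕜] [Semiring A] [Algebra 𝕜 A]
    {m : ℕ} (hm : 2 ≤ m) {i : Fin m → κ} {p : Fin m} (hp : ∀ q, q ≠ p → i q ≠ i p) {φ : A → A}
    {P : A → Prop} (hφ : ∀ a : κ → A, (∃ j, P (a j)) → ∃ θ : A ≃ₐ[𝕜] A,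
      (List.ofFn fun j => φ (a (i j))).prod = θ (List.ofFn fun j => a (i j)).prod) (a b : A)
    (hab : P a ∨ P b) :
    ∃ θ : A ≃ₐ[𝕜] A, φ b ^ (p : ℕ) * φ a * φ b ^ (m - 1 - p) =
      θ (b ^ (p : ℕ) * a * b ^ (m - 1 - p)) := by
  classical
  have : Nontrivial (Fin m) := Fin.nontrivial_iff_two_le.2 hm
  obtain ⟨q, hq⟩ := exists_ne p
  have hiff (j : Fin m) : i j = i p ↔ j = p := ⟨not_imp_not.1 (hp j), congrArg i⟩
  obtain ⟨θ, hθ⟩ := hφ (fun j => if j = i p then a else b) <| hab.elim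
    (fun ha => ⟨i p, by rwa [if_pos rfl]⟩) (fun hb => ⟨i q, by rwa [if_neg (hp q hq)]⟩)
  refine ⟨θ, ?_⟩
  simpa only [hiff, apply_ite φ, prod_ofFn_ite_eq] using hθ

theorem stmt5_general {𝕜 E κ : Type*} [NontriviallyNormedField 𝕜] [CompleteSpace 𝕜]
    [NormedAddCommGroup E] [NormedSpace 𝕜 E] [CompleteSpace E] [SeparatingDual 𝕜 E]
    (A : Subalgebra 𝕜 (E →L[𝕜] E))
    (hA : ∀ T : E →L[𝕜] E, (T : E →ₗ[𝕜] E).rank < ℵ₀ → T ∈ A) {m : ℕ} (hm : 2 ≤ m)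
    (i : Fin m → κ) (hp : ∃ p : Fin m, ∀ q : Fin m, q ≠ p → i q ≠ i p) (φ : A → A)
    (hrange : ∀ T : E →L[𝕜] E, (T : E →ₗ[𝕜] E).rank ≤ 2 → ∃ a : A, (φ a : E →L[𝕜] E) = T)
    (hφ : ∀ a : κ → A, (∃ j, ((a j : E →L[𝕜] E) : E →ₗ[𝕜] E).rank ≤ 1) →
      ∃ θ : A ≃ₐ[𝕜] A,
        (List.ofFn fun j => φ (a (i j))).prod = θ (List.ofFn fun j => a (i j)).prod) :
    ∃ ξ : 𝕜, ξ ^ m = 1 ∧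
      ((∃ S : E ≃L[𝕜] E, ∀ a : A,
          (φ a : E →L[𝕜] E) = ξ • ((S : E →L[𝕜] E) ∘L a ∘L (S.symm : E →L[𝕜] E))) ∨
        ∃ S : (E →L[𝕜] 𝕜) ≃L[𝕜] E, ∀ a : A,
          (φ a : E →L[𝕜] E) = ξ • ((S : (E →L[𝕜] 𝕜) →L[𝕜] E) ∘L (compL 𝕜 E E 𝕜).flip a ∘L
            (S.symm : E →L[𝕜] E →L[𝕜] 𝕜))) := by
  obtain ⟨p, hp⟩ := hp
  obtain ⟨N, rfl⟩ := Nat.exists_eq_add_of_le' hm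
  have hA₁ (f : E →L[𝕜] 𝕜) (v : E) : f.smulRight v ∈ A :=
    hA _ ((rank_smulRight_le f v).trans_lt one_lt_aleph0)
  have hP := preservesPowTrace_of_forall_exists_algEquiv (N := N) hA₁ (by omega) hrange
    (exists_algEquiv_pow_mul_mul_pow hm hp
      (P := fun a : A => ((a : E →L[𝕜] E) : E →ₗ[𝕜] E).rank ≤ 1) hφ)
  exact hP.exists_continuousLinearEquiv (fun f v => ⟨⟨_, hA₁ f v⟩, rfl⟩)
    (fun f v => hrange _ ((rank_smulRight_le f v).trans one_le_two)) Subtype.val_injective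

theorem IsAlgAutomorphism.exists_algEquiv_s5 {A : Type*} [Ring A] [Algebra ℂ A] {θ : A → A}
    (hθ : IsAlgAutomorphism θ) : ∃ e : A ≃ₐ[ℂ] A, ⇑e = θ :=
  ⟨AlgEquiv.ofLinearEquiv (LinearEquiv.ofBijective hθ.2.1.mk' hθ.1)
    (map_one (MulEquiv.ofBijective (MulHom.mk θ hθ.2.2) hθ.1)) hθ.2.2, rfl⟩

theorem stmt5 {E : Type*} [NormedAddCommGroup E] [NormedSpace ℂ E] [CompleteSpace E]
    (A : Subalgebra ℂ (E →L[ℂ] E))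
    -- `A` is a standard operator algebra: it contains every bounded finite-rank operator
    (hA : ∀ T : E →L[ℂ] E, LinearMap.rank (T : E →ₗ[ℂ] E) < ℵ₀ → T ∈ A)
    -- data of the generalized product `T_1 * ⋯ * T_k = T_{i 0} ⋯ T_{i (m-1)}`
    (m k : ℕ) (hk : 2 ≤ k) (i : Fin m → Fin k)
    (hionto : Function.Surjective i)
    (hp : ∃ p : Fin m, ∀ q : Fin m, q ≠ p → i q ≠ i p)
    (φ : A → A)
    -- the range of `φ` contains all bounded operators of rank at most two
    (hrange : ∀ T : E →L[ℂ] E, LinearMap.rank (T : E →ₗ[ℂ] E) ≤ 2 →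
      ∃ a : A, (φ a : E →L[ℂ] E) = T)
    -- operational local automorphism condition for the generalized product
    (hφ : ∀ a : Fin k → A,
      (∃ j : Fin k, LinearMap.rank ((a j : E →L[ℂ] E) : E →ₗ[ℂ] E) ≤ 1) →
      ∃ θ : A → A, IsAlgAutomorphism θ ∧
        (List.ofFn fun j => φ (a (i j))).prod = θ (List.ofFn fun j => a (i j)).prod) :
    ∃ ξ : ℂ, ξ ^ m = 1 ∧
      ((∃ S : E ≃L[ℂ] E, ∀ a : A,
          (φ a : E →L[ℂ] E) =
            ξ • ((S : E →L[ℂ] E) ∘L (a : E →L[ℂ] E) ∘L (S.symm : E →L[ℂ] E))) ∨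
       (∃ S : (E →L[ℂ] ℂ) ≃L[ℂ] E, ∀ a : A,
          (φ a : E →L[ℂ] E) =
            ξ • ((S : (E →L[ℂ] ℂ) →L[ℂ] E) ∘L dualOp (a : E →L[ℂ] E) ∘L
              (S.symm : E →L[ℂ] (E →L[ℂ] ℂ))))) := by
  refine stmt5_general A hA (hk.trans (by simpa using Fintype.card_le_of_surjective i hionto)) i hp
    φ hrange fun a ha => ?_
  obtain ⟨θ, hθ, hprod⟩ := hφ a ha
  obtain ⟨e, rfl⟩ := hθ.exists_algEquiv_s5
  exact ⟨e, hprod⟩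
end
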